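/- arXiv:1908.07361 — 4 statements merged into one kernel-verified Lean document; each statement's English description precedes it below -/
import Mathlib

section
/- Let d be a rational prime and let m ≥ 2, n ≥ 1 be integers. Then the number of irreducible factors of the Misiurewicz polynomial G_{d,m,n}(c) over ℚ is bounded above by the number of irreducible factors of the reduction G̅_{d,0,n}(c) ∈ 𝔽_d[c] over 𝔽_d. -/
open Polynomial

noncomputable section

/-- `critPoly d i` is `f_{c,d}^i(0)` as a polynomial in the variable `c` over `ℤ`,
where `f_{c,d}(x) = x^d + c`. -/
def critPoly (d : ℕ) : ℕ → Polynomial ℤ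
  | 0 => 0
  | i + 1 => critPoly d i ^ d + X

/-- The field of rational functions in `c` over `ℚ`, realized as the fraction field of `ℤ[c]`. -/
abbrev RF : Type := FractionRing (Polynomial ℤ)

/-- The natural inclusion `ℤ[c] → ℚ(c)`. -/
def toRF (p : Polynomial ℤ) : RF := algebraMap (Polynomial ℤ) RF p

/-- `G_{d,0,n} = ∏_{k ∣ n} (f_{c,d}^k(0))^{μ(n/k)}` as a rational function. -/
def G0Rat (d n : ℕ) : RF :=
  ∏ k ∈ n.divisors, toRF (critPoly d k) ^ (ArithmeticFunction.moebius (n / k))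

/-- `F_{d,m,n}` as a rational function. -/
def FRat (d m n : ℕ) : RF :=
  ∏ k ∈ n.divisors,
    ((toRF (critPoly d (m + k)) - toRF (critPoly d m)) /
      (toRF (critPoly d (m - 1 + k)) - toRF (critPoly d (m - 1)))) ^
      (ArithmeticFunction.moebius (n / k))

/-- `G_{d,m,n}` (for `m ≥ 2`) as a rational function. -/
def GRat (d m n : ℕ) : RF :=
  if n ∣ m - 1 then FRat d m n / FRat d 1 n else FRat d m n

/-- `G : ℤ[c]` is the Misiurewicz polynomial `G_{d,m,n}` (for `m ≥ 2`). -/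
def IsMisiurewicz (d m n : ℕ) (G : Polynomial ℤ) : Prop := toRF G = GRat d m n

/-- `G0 : ℤ[c]` is the polynomial `G_{d,0,n}`. -/
def IsG0 (d n : ℕ) (G0 : Polynomial ℤ) : Prop := toRF G0 = G0Rat d n

/-! ### Basic facts on the critical orbit polynomials -/

/-- The difference `f^{m+k}(0) - f^m(0)`. -/
def orbDiff (d m k : ℕ) : ℤ[X] := critPoly d (m + k) - critPoly d m

/-- The quotient of two consecutive differences. -/
def orbQuot (d m k : ℕ) : ℤ[X] :=
  ∑ i ∈ Finset.range d, critPoly d (m + k) ^ i * critPoly d m ^ (d - 1 - i)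

lemma orbDiff_zero (d k : ℕ) : orbDiff d 0 k = critPoly d k := by
  simp [orbDiff, critPoly]

lemma orbDiff_succ (d m k : ℕ) : orbDiff d (m + 1) k = orbQuot d m k * orbDiff d m k := by
  unfold orbDiff orbQuot
  rw [geom_sum₂_mul, show m + 1 + k = (m + k) + 1 by omega]
  simp [critPoly]

lemma orbDiff_eq_prod (d m k : ℕ) :
    orbDiff d m k = critPoly d k * ∏ j ∈ Finset.range m, orbQuot d j k := by
  induction m with
  | zero => simp [orbDiff_zero]
  | succ m ih => rw [orbDiff_succ, ih, Finset.prod_range_succ]; ring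

lemma critPoly_monic_natDegree (d : ℕ) (hd : 2 ≤ d) (k : ℕ) :
    (critPoly d (k + 1)).Monic ∧ (critPoly d (k + 1)).natDegree = d ^ k := by
  induction k with
  | zero =>
    have : critPoly d 1 = X := by simp [critPoly]; omega
    simp [this, monic_X]
  | succ k ih =>
    obtain ⟨h1, h2⟩ := ih
    have hm : (critPoly d (k + 1) ^ d).Monic := h1.pow d
    have hn : (critPoly d (k + 1) ^ d).natDegree = d ^ (k + 1) := by
      rw [h1.natDegree_pow, h2, pow_succ, mul_comm]
    have hlt : (X : ℤ[X]).degree < (critPoly d (k + 1) ^ d).degree := by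
      rw [degree_X, degree_eq_natDegree hm.ne_zero, hn]
      have : 1 < d ^ (k + 1) := Nat.one_lt_pow (by omega) (by omega)
      exact_mod_cast this
    have e : critPoly d (k + 1 + 1) = critPoly d (k + 1) ^ d + X := rfl
    rw [e]
    refine ⟨hm.add_of_left hlt, ?_⟩
    rw [natDegree_add_eq_left_of_degree_lt hlt, hn]

lemma critPoly_monic (d : ℕ) (hd : 2 ≤ d) (k : ℕ) (hk : 1 ≤ k) : (critPoly d k).Monic := by
  obtain ⟨j, rfl⟩ : ∃ j, k = j + 1 := ⟨k - 1, by omega⟩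
  exact (critPoly_monic_natDegree d hd j).1

lemma orbDiff_monic (d : ℕ) (hd : 2 ≤ d) (m k : ℕ) (hk : 1 ≤ k) : (orbDiff d m k).Monic := by
  cases m with
  | zero => rw [orbDiff_zero]; exact critPoly_monic d hd k hk
  | succ m =>
    obtain ⟨j, rfl⟩ : ∃ j, k = j + 1 := ⟨k - 1, by omega⟩
    unfold orbDiff
    obtain ⟨h1, h2⟩ := critPoly_monic_natDegree d hd m
    obtain ⟨h3, h4⟩ := critPoly_monic_natDegree d hd (m + 1 + j)
    rw [show m + 1 + (j + 1) = m + 1 + j + 1 by omega]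
    refine h3.sub_of_left ?_
    rw [degree_eq_natDegree h1.ne_zero, degree_eq_natDegree h3.ne_zero, h2, h4]
    exact_mod_cast Nat.pow_lt_pow_right (by omega) (by omega)

/-- Reduction modulo `d`. -/
abbrev redM (d : ℕ) : ℤ[X] →+* (ZMod d)[X] := mapRingHom (Int.castRingHom (ZMod d))

lemma red_orbDiff (d : ℕ) [hd : Fact d.Prime] (m k : ℕ) :
    redM d (orbDiff d m k) = redM d (critPoly d k) ^ (d ^ m) := by
  induction m with
  | zero => simp [orbDiff_zero]
  | succ m ih =>
    have e : orbDiff d (m + 1) k = critPoly d (m + k) ^ d - critPoly d m ^ d := by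
      unfold orbDiff
      rw [show m + 1 + k = (m + k) + 1 by omega]
      simp [critPoly]
    rw [e, map_sub, map_pow, map_pow, ← sub_pow_char, ← map_sub]
    change redM d (orbDiff d m k) ^ d = _
    rw [ih, ← pow_mul, pow_succ]

lemma derivative_red_critPoly (d : ℕ) [hd : Fact d.Prime] (k : ℕ) (hk : 1 ≤ k) :
    derivative (redM d (critPoly d k)) = 1 := by
  obtain ⟨j, rfl⟩ : ∃ j, k = j + 1 := ⟨k - 1, by omega⟩
  simp [critPoly, derivative_pow]

lemma sq_not_dvd (d : ℕ) [hd : Fact d.Prime] (k : ℕ) (hk : 1 ≤ k) (q : (ZMod d)[X])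
    (hq : Irreducible q) : ¬ q ^ 2 ∣ redM d (critPoly d k) := by
  rintro ⟨r, hr⟩
  have h := derivative_red_critPoly d k hk
  rw [hr] at h
  apply hq.not_isUnit
  apply isUnit_of_dvd_one
  rw [← h, derivative_mul, derivative_pow]
  refine dvd_add (Dvd.dvd.mul_right ?_ _) (Dvd.dvd.mul_right (dvd_pow_self q two_ne_zero) _)
  simp only [Nat.add_one_sub_one, pow_one]
  exact Dvd.dvd.mul_right (Dvd.intro_left _ rfl) _

/-- The period of the critical point modulo `q`. -/
lemma exists_period (d : ℕ) [hd : Fact d.Prime] (q : (ZMod d)[X]) :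
    ∃ N : ℕ, ∀ k, q ∣ redM d (critPoly d k) ↔ N ∣ k := by
  let f : AdjoinRoot q → AdjoinRoot q := fun x => x ^ d + AdjoinRoot.mk q X
  have hf : ∀ k, f^[k] 0 = AdjoinRoot.mk q (redM d (critPoly d k)) := by
    intro k
    induction k with
    | zero => simp [critPoly]
    | succ k ih =>
      rw [Function.iterate_succ_apply', ih]
      simp [f, critPoly]
  refine ⟨Function.minimalPeriod f 0, fun k => ?_⟩
  rw [← Function.isPeriodicPt_iff_minimalPeriod_dvd, Function.IsPeriodicPt, Function.IsFixedPt, hf,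
    AdjoinRoot.mk_eq_zero]

lemma moebius_sum (N n : ℕ) (hn : 1 ≤ n) :
    ∑ k ∈ n.divisors, (ArithmeticFunction.moebius (n / k)) * (if N ∣ k then (1 : ℤ) else 0) =
      if n = N then 1 else 0 := by
  have h := (ArithmeticFunction.sum_eq_iff_sum_mul_moebius_eq (R := ℤ)
    (f := fun n => if n = N then 1 else 0) (g := fun k => if N ∣ k then (1 : ℤ) else 0)).1 (by
      intro n hn
      simp [Finset.sum_ite_eq', Nat.mem_divisors, hn.ne']) n hn
  rw [← h, ← Nat.sum_divisorsAntidiagonal'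
    (f := fun a b => ((ArithmeticFunction.moebius a : ℤ)) * (if N ∣ b then (1 : ℤ) else 0))]
  simp

/-! ### The valuation relation -/

/-- `x` is a quotient of monic integer polynomials, whose reductions have multiplicities at `q`
differing by `z`. -/
def HasVal (d : ℕ) (q : (ZMod d)[X]) (x : RF) (z : ℤ) : Prop :=
  ∃ a b : ℤ[X], a.Monic ∧ b.Monic ∧ x * toRF b = toRF a ∧
    (multiplicity q (redM d a) : ℤ) - multiplicity q (redM d b) = z

lemma toRF_mul (a b : ℤ[X]) : toRF (a * b) = toRF a * toRF b := map_mul _ _ _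
lemma toRF_sub (a b : ℤ[X]) : toRF (a - b) = toRF a - toRF b := map_sub _ _ _
lemma toRF_one : toRF 1 = 1 := map_one _
lemma toRF_inj {a b : ℤ[X]} (h : toRF a = toRF b) : a = b :=
  IsFractionRing.injective (ℤ[X]) RF h
lemma toRF_ne {a : ℤ[X]} (h : a ≠ 0) : toRF a ≠ 0 := by
  intro h0
  apply h
  apply toRF_inj
  rw [h0]
  exact (map_zero _).symm

section val
variable {d : ℕ} [hd : Fact d.Prime] {q : (ZMod d)[X]}

lemma mult_mul (hq : Irreducible q) {a b : ℤ[X]} (ha : a.Monic) (hb : b.Monic) :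
    multiplicity q (redM d (a * b)) = multiplicity q (redM d a) + multiplicity q (redM d b) := by
  rw [map_mul]
  apply multiplicity_mul hq.prime
  apply FiniteMultiplicity.of_prime_left hq.prime
  exact mul_ne_zero (ha.map _).ne_zero (hb.map _).ne_zero

lemma hasVal_toRF (hq : Irreducible q) {a : ℤ[X]} (ha : a.Monic) {z : ℕ} (h : multiplicity q (redM d a) = z) :
    HasVal d q (toRF a) z := by
  refine ⟨a, 1, ha, monic_one, by rw [toRF_one, mul_one], ?_⟩
  rw [h, map_one, multiplicity_eq_zero.2 (fun h => hq.not_isUnit (isUnit_of_dvd_one h))]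
  simp

lemma HasVal.mul (hq : Irreducible q) {x y : RF} {z w : ℤ} (hx : HasVal d q x z) (hy : HasVal d q y w) :
    HasVal d q (x * y) (z + w) := by
  obtain ⟨a, b, ha, hb, h, e⟩ := hx
  obtain ⟨a', b', ha', hb', h', e'⟩ := hy
  refine ⟨a * a', b * b', ha.mul ha', hb.mul hb', ?_, ?_⟩
  · rw [toRF_mul, toRF_mul, ← h, ← h']; ring
  · rw [mult_mul hq ha ha', mult_mul hq hb hb', ← e, ← e']; push_cast; ring

lemma HasVal.inv {x : RF} {z : ℤ} (hx : HasVal d q x z) : HasVal d q x⁻¹ (-z) := by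
  obtain ⟨a, b, ha, hb, h, e⟩ := hx
  have h0 : x ≠ 0 := by
    rintro rfl
    rw [zero_mul] at h
    exact toRF_ne ha.ne_zero h.symm
  refine ⟨b, a, hb, ha, ?_, by rw [← e]; ring⟩
  rw [← h]; field_simp

lemma hasVal_one (hq : Irreducible q) : HasVal d q 1 0 := by
  have := hasVal_toRF (z := 0) hq (monic_one) (by
    rw [map_one, multiplicity_eq_zero.2 (fun h => hq.not_isUnit (isUnit_of_dvd_one h))])
  rw [toRF_one] at this
  exact_mod_cast this

lemma HasVal.div (hq : Irreducible q) {x y : RF} {z w : ℤ} (hx : HasVal d q x z) (hy : HasVal d q y w) :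
    HasVal d q (x / y) (z - w) := by
  rw [div_eq_mul_inv, sub_eq_add_neg]; exact hx.mul hq hy.inv

lemma HasVal.pow (hq : Irreducible q) {x : RF} {z : ℤ} (hx : HasVal d q x z) (k : ℕ) : HasVal d q (x ^ k) (k * z) := by
  induction k with
  | zero => simpa using hasVal_one hq
  | succ k ih =>
    rw [pow_succ]
    convert ih.mul hq hx using 1
    push_cast; ring

lemma HasVal.zpow (hq : Irreducible q) {x : RF} {z : ℤ} (hx : HasVal d q x z) (k : ℤ) : HasVal d q (x ^ k) (k * z) := by
  cases k with
  | ofNat k => simpa using hx.pow hq k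
  | negSucc k =>
    rw [zpow_negSucc, Int.negSucc_eq]
    convert (hx.pow hq (k + 1)).inv using 1
    push_cast; ring

lemma HasVal.prod (hq : Irreducible q) {ι : Type} (s : Finset ι) {x : ι → RF} {z : ι → ℤ}
    (hx : ∀ i ∈ s, HasVal d q (x i) (z i)) : HasVal d q (∏ i ∈ s, x i) (∑ i ∈ s, z i) := by
  classical
  induction s using Finset.induction_on with
  | empty => simpa using hasVal_one hq
  | insert a s ha ih =>
    rw [Finset.prod_insert ha, Finset.sum_insert ha]
    exact (hx a (Finset.mem_insert_self a s)).mul hq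
      (ih (fun i hi => hx i (Finset.mem_insert_of_mem hi)))

lemma HasVal.eq (hq : Irreducible q) {a : ℤ[X]} {z : ℤ} (hx : HasVal d q (toRF a) z) :
    a.Monic ∧ (multiplicity q (redM d a) : ℤ) = z := by
  obtain ⟨b, c, hb, hc, h, e⟩ := hx
  rw [← toRF_mul] at h
  have h := toRF_inj h
  have ha : a.Monic := hc.of_mul_monic_right (h ▸ hb)
  refine ⟨ha, ?_⟩
  rw [← e, ← h, mult_mul hq ha hc]; push_cast; ring

lemma mult_crit (hq : Irreducible q) {N : ℕ} (hN : ∀ k, q ∣ redM d (critPoly d k) ↔ N ∣ k) {k : ℕ} (hk : 1 ≤ k) :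
    multiplicity q (redM d (critPoly d k)) = if N ∣ k then 1 else 0 := by
  split_ifs with h
  · exact multiplicity_eq_of_dvd_of_not_dvd (by rw [pow_one]; exact (hN k).2 h)
      (sq_not_dvd d k hk q hq)
  · exact multiplicity_eq_zero.2 (fun h' => h ((hN k).1 h'))

lemma hasVal_orbDiff (hq : Irreducible q) {N : ℕ} (hN : ∀ k, q ∣ redM d (critPoly d k) ↔ N ∣ k) (m : ℕ) {k : ℕ}
    (hk : 1 ≤ k) : HasVal d q (toRF (orbDiff d m k)) ((d : ℤ) ^ m * if N ∣ k then 1 else 0) := by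
  have h := hasVal_toRF hq (orbDiff_monic d hd.out.two_le m k hk)
    (z := d ^ m * if N ∣ k then 1 else 0) (by
      rw [red_orbDiff, FiniteMultiplicity.multiplicity_pow hq.prime, mult_crit hq hN hk]
      exact FiniteMultiplicity.of_prime_left hq.prime
        ((critPoly_monic d hd.out.two_le k hk).map _).ne_zero)
  exact_mod_cast h

lemma hasVal_FRat (hq : Irreducible q) {N : ℕ} (hN : ∀ k, q ∣ redM d (critPoly d k) ↔ N ∣ k) (m n : ℕ) (hn : 1 ≤ n)
    (hm : 1 ≤ m) :
    HasVal d q (FRat d m n) (((d : ℤ) ^ m - (d : ℤ) ^ (m - 1)) * if n = N then 1 else 0) := by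
  rw [← moebius_sum N n hn, Finset.mul_sum]
  refine HasVal.prod hq _ (fun k hk => ?_)
  have hk : 1 ≤ k := Nat.pos_of_mem_divisors hk
  rw [← toRF_sub, ← toRF_sub]
  convert ((hasVal_orbDiff hq hN m hk).div hq (hasVal_orbDiff hq hN (m - 1) hk)).zpow hq
    (ArithmeticFunction.moebius (n / k)) using 1
  · rfl
  · ring

lemma hasVal_GRat (hq : Irreducible q) {N : ℕ} (hN : ∀ k, q ∣ redM d (critPoly d k) ↔ N ∣ k) (m n : ℕ) (hn : 1 ≤ n)
    (hm : 1 ≤ m) :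
    ∃ w : ℤ, HasVal d q (GRat d m n) (w * if n = N then 1 else 0) := by
  unfold GRat
  by_cases h : n ∣ m - 1
  · rw [if_pos h]
    refine ⟨((d : ℤ) ^ m - (d : ℤ) ^ (m - 1)) - ((d : ℤ) ^ 1 - (d : ℤ) ^ (1 - 1)), ?_⟩
    rw [sub_mul]
    exact (hasVal_FRat hq hN m n hn hm).div hq (hasVal_FRat hq hN 1 n hn le_rfl)
  · rw [if_neg h]
    exact ⟨_, hasVal_FRat hq hN m n hn hm⟩

lemma hasVal_G0Rat (hq : Irreducible q) {N : ℕ} (hN : ∀ k, q ∣ redM d (critPoly d k) ↔ N ∣ k) (n : ℕ) (hn : 1 ≤ n) :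
    HasVal d q (G0Rat d n) (if n = N then 1 else 0) := by
  rw [← moebius_sum N n hn]
  refine HasVal.prod hq _ (fun k hk => ?_)
  have hk : 1 ≤ k := Nat.pos_of_mem_divisors hk
  have h := hasVal_orbDiff hq hN 0 hk
  rw [orbDiff_zero, pow_zero, one_mul] at h
  exact h.zpow hq _

end val

/-! ### The maximal ideal attached to an irreducible polynomial modulo `d` -/

/-- The ideal `(d, q)` of `ℤ[c]`. -/
def locIdeal (d : ℕ) (q : (ZMod d)[X]) : Ideal ℤ[X] := (Ideal.span {q}).comap (redM d)

lemma mem_locIdeal {d : ℕ} {q : (ZMod d)[X]} {p : ℤ[X]} : p ∈ locIdeal d q ↔ q ∣ redM d p := by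
  rw [locIdeal, Ideal.mem_comap, Ideal.mem_span_singleton]

lemma redM_surj (d : ℕ) : Function.Surjective (redM d) :=
  map_surjective _ (ZMod.ringHom_surjective _)

lemma dvd_of_redM_eq_zero {d : ℕ} {p : ℤ[X]} (h : redM d p = 0) : (d : ℤ[X]) ∣ p := by
  have e : (d : ℤ[X]) = C (d : ℤ) := by simp
  rw [e, C_dvd_iff_dvd_coeff]
  intro i
  have := congrArg (fun r => coeff r i) h
  simpa [coeff_map, ZMod.intCast_zmod_eq_zero_iff_dvd] using this

section loc
variable {d : ℕ} [hd : Fact d.Prime] {q : (ZMod d)[X]}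

lemma natCast_mem_locIdeal : (d : ℤ[X]) ∈ locIdeal d q := by
  rw [mem_locIdeal]; simp

lemma locIdeal_isMaximal (hq : Irreducible q) : (locIdeal d q).IsMaximal := by
  have : (Ideal.span {q}).IsMaximal := PrincipalIdealRing.isMaximal_of_irreducible hq
  exact Ideal.comap_isMaximal_of_surjective _ (redM_surj d)

lemma loc_cancel (hq : Irreducible q) {s x : ℤ[X]} (hs : s ∉ locIdeal d q)
    (h : s * x ∈ locIdeal d q ^ 2) : x ∈ locIdeal d q ^ 2 := by
  obtain ⟨r, i, hi, e⟩ := (locIdeal_isMaximal hq).exists_inv hs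
  have h2 : i ^ 2 ∈ locIdeal d q ^ 2 := Ideal.pow_mem_pow hi 2
  have : x = (r + i * r) * (s * x) + x * i ^ 2 := by
    linear_combination (-(1 + i) * x) * e
  rw [this]
  exact Ideal.add_mem _ (Ideal.mul_mem_left _ _ h) (Ideal.mul_mem_left _ _ h2)

lemma natCast_not_mem_sq (hq : Irreducible q) : (d : ℤ[X]) ∉ locIdeal d q ^ 2 := by
  intro h
  obtain ⟨g, hg⟩ := redM_surj d q
  have key : locIdeal d q ^ 2 ≤
      Ideal.span {(d : ℤ[X])} * locIdeal d q ⊔ Ideal.span {g ^ 2} := by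
    have dec : ∀ x ∈ locIdeal d q, ∃ a b : ℤ[X], x = d * a + g * b := by
      intro x hx
      obtain ⟨r, hr⟩ := mem_locIdeal.1 hx
      obtain ⟨b, rfl⟩ := redM_surj d r
      obtain ⟨a, ha⟩ := dvd_of_redM_eq_zero (d := d) (p := x - g * b) (by
        rw [map_sub, map_mul, hg, hr, sub_self])
      exact ⟨a, b, by rw [← ha]; ring⟩
    rw [pow_two, Ideal.mul_le]
    intro x hx y hy
    obtain ⟨a, b, rfl⟩ := dec x hx
    obtain ⟨a', b', rfl⟩ := dec y hy
    have hgm : g ∈ locIdeal d q := mem_locIdeal.2 (by rw [hg])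
    have e : (d * a + g * b) * (d * a' + g * b') =
        d * (a * (d * a' + g * b') + a' * b * g) + (b * b') * g ^ 2 := by ring
    rw [e]
    refine Ideal.add_mem _ (Ideal.mem_sup_left ?_) (Ideal.mem_sup_right ?_)
    · refine Ideal.mul_mem_mul (Ideal.mem_span_singleton_self _) ?_
      exact Ideal.add_mem _ (Ideal.mul_mem_left _ _ hy) (Ideal.mul_mem_left _ _ hgm)
    · exact Ideal.mul_mem_left _ _ (Ideal.mem_span_singleton_self _)
  obtain ⟨x, hx, y, hy, hxy⟩ := Submodule.mem_sup.1 (key h)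
  obtain ⟨a, ha, rfl⟩ := Ideal.mem_span_singleton_mul.1 hx
  obtain ⟨c, rfl⟩ := Ideal.mem_span_singleton.1 hy
  have hd0 : (d : ℤ[X]) ≠ 0 := by exact_mod_cast hd.out.ne_zero
  have hc : redM d c = 0 := by
    have := congrArg (redM d) hxy
    rw [map_add, map_mul, map_mul, map_pow, hg, map_natCast, CharP.cast_eq_zero, zero_mul,
      zero_add] at this
    exact (mul_eq_zero.1 this).resolve_left (pow_ne_zero _ hq.ne_zero)
  obtain ⟨c', rfl⟩ := dvd_of_redM_eq_zero hc
  have h1 : a + g ^ 2 * c' = 1 := by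
    apply mul_left_cancel₀ hd0
    linear_combination hxy
  have h2 := congrArg (redM d) h1
  apply hq.not_isUnit
  apply isUnit_of_dvd_one
  rw [map_one] at h2
  rw [← h2, map_add, map_mul, map_pow, hg]
  exact dvd_add (mem_locIdeal.1 ha) (Dvd.dvd.mul_right (dvd_pow_self q two_ne_zero) _)

lemma derivative_mem_of_mem_sq {p : ℤ[X]} (h : p ∈ locIdeal d q ^ 2) :
    derivative p ∈ locIdeal d q := by
  rw [pow_two] at h
  refine Submodule.mul_induction_on h ?_ ?_
  · intro x hx y hy
    rw [derivative_mul]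
    exact Ideal.add_mem _ (Ideal.mul_mem_left _ _ hy) (Ideal.mul_mem_right _ _ hx)
  · intro x y hx hy
    rw [derivative_add]
    exact Ideal.add_mem _ hx hy

/-- Main congruence: the geometric sum modulo an ideal. -/
lemma geom_congr {R : Type*} [CommRing R] (I : Ideal R) (v u : R) (k : ℕ) (h : v - u ∈ I) :
    (∑ i ∈ Finset.range k, v ^ i * u ^ (k - 1 - i)) - k * u ^ (k - 1) ∈ I := by
  rw [← Ideal.Quotient.eq] at h ⊢
  simp only [map_sum, map_mul, map_pow, h, map_natCast]
  exact geom_sum₂_self _ _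

lemma geom_not_mem_sq (hq : Irreducible q) {v u : ℤ[X]} (hu : u ∉ locIdeal d q)
    (h : v - u ∈ locIdeal d q ^ 2) :
    (∑ i ∈ Finset.range d, v ^ i * u ^ (d - 1 - i)) ∉ locIdeal d q ^ 2 := by
  intro hm
  have h1 := geom_congr _ v u d h
  have h2 := Ideal.sub_mem _ hm h1
  rw [sub_sub_cancel, mul_comm] at h2
  have hp : (locIdeal d q).IsPrime := (locIdeal_isMaximal hq).isPrime
  exact natCast_not_mem_sq hq (loc_cancel hq (fun h => hu (hp.mem_of_pow_mem _ h)) h2)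

/-- Local units. -/
def IsLU (d : ℕ) (q : (ZMod d)[X]) (x : RF) : Prop :=
  ∃ s t : ℤ[X], s ∉ locIdeal d q ∧ t ∉ locIdeal d q ∧ x * toRF t = toRF s

lemma IsLU.mul (hq : Irreducible q) {x y : RF} (hx : IsLU d q x) (hy : IsLU d q y) :
    IsLU d q (x * y) := by
  obtain ⟨s, t, hs, ht, h⟩ := hx
  obtain ⟨s', t', hs', ht', h'⟩ := hy
  have hp : (locIdeal d q).IsPrime := (locIdeal_isMaximal hq).isPrime
  refine ⟨s * s', t * t', fun h => (hp.mem_or_mem h).elim hs hs',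
    fun h => (hp.mem_or_mem h).elim ht ht', ?_⟩
  rw [toRF_mul, toRF_mul, ← h, ← h']; ring

lemma isLU_toRF (hq : Irreducible q) {a : ℤ[X]} (ha : a ∉ locIdeal d q) : IsLU d q (toRF a) :=
  ⟨a, 1, ha, fun h => (locIdeal_isMaximal hq).ne_top ((Ideal.eq_top_iff_one _).2 h),
    by rw [toRF_one, mul_one]⟩

lemma isLU_one (hq : Irreducible q) : IsLU d q 1 := by
  rw [← toRF_one]
  exact isLU_toRF hq (fun h => (locIdeal_isMaximal hq).ne_top ((Ideal.eq_top_iff_one _).2 h))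

lemma IsLU.inv {x : RF} (hx : IsLU d q x) : IsLU d q x⁻¹ := by
  obtain ⟨s, t, hs, ht, h⟩ := hx
  have h0 : x ≠ 0 := by
    rintro rfl
    rw [zero_mul] at h
    exact toRF_ne (a := s) (fun h0 => hs (by rw [h0]; exact Ideal.zero_mem _)) h.symm
  refine ⟨t, s, ht, hs, ?_⟩
  rw [← h]; field_simp

lemma IsLU.pow (hq : Irreducible q) {x : RF} (hx : IsLU d q x) (k : ℕ) : IsLU d q (x ^ k) := by
  induction k with
  | zero => simpa using isLU_one hq
  | succ k ih => rw [pow_succ]; exact ih.mul hq hx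

lemma IsLU.zpow (hq : Irreducible q) {x : RF} (hx : IsLU d q x) (k : ℤ) : IsLU d q (x ^ k) := by
  cases k with
  | ofNat k => simpa using hx.pow hq k
  | negSucc k => rw [zpow_negSucc]; exact (hx.pow hq (k + 1)).inv

lemma IsLU.prod (hq : Irreducible q) {ι : Type} (s : Finset ι) {x : ι → RF}
    (hx : ∀ i ∈ s, IsLU d q (x i)) : IsLU d q (∏ i ∈ s, x i) := by
  classical
  induction s using Finset.induction_on with
  | empty => simpa using isLU_one hq
  | insert a s ha ih =>
    rw [Finset.prod_insert ha]
    exact (hx a (Finset.mem_insert_self a s)).mul hq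
      (ih (fun i hi => hx i (Finset.mem_insert_of_mem hi)))

lemma FRat_local (hq : Irreducible q) {n : ℕ} (hn : 1 ≤ n)
    (hN : ∀ k, q ∣ redM d (critPoly d k) ↔ n ∣ k) (m : ℕ) :
    ∃ u, IsLU d q u ∧ FRat d (m + 1) n = toRF (orbQuot d m n) * u := by
  have hmem : n ∈ n.divisors := Nat.mem_divisors_self n (by omega)
  refine ⟨∏ k ∈ n.divisors.erase n,
    ((toRF (critPoly d (m + 1 + k)) - toRF (critPoly d (m + 1))) /
      (toRF (critPoly d (m + 1 - 1 + k)) - toRF (critPoly d (m + 1 - 1)))) ^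
      (ArithmeticFunction.moebius (n / k)), ?_, ?_⟩
  rotate_left
  · unfold FRat
    rw [← Finset.mul_prod_erase _ _ hmem]
    congr 1
    rw [Nat.div_self (by omega), ArithmeticFunction.moebius_apply_one, zpow_one,
      Nat.add_sub_cancel, ← toRF_sub, ← toRF_sub]
    change toRF (orbDiff d (m + 1) n) / toRF (orbDiff d m n) = _
    rw [orbDiff_succ, toRF_mul, mul_div_assoc, div_self, mul_one]
    exact toRF_ne (orbDiff_monic d hd.out.two_le m n hn).ne_zero
  · refine IsLU.prod hq _ (fun k hk => ?_)
    have hkn : k ≠ n := Finset.ne_of_mem_erase hk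
    have hk' := Finset.mem_of_mem_erase hk
    have hlt : ¬ n ∣ k := fun h => hkn (Nat.dvd_antisymm (Nat.dvd_of_mem_divisors hk') h)
    have hD : ∀ j, orbDiff d j k ∉ locIdeal d q := by
      intro j h
      rw [mem_locIdeal, red_orbDiff] at h
      exact hlt ((hN k).1 (hq.prime.dvd_of_dvd_pow h))
    rw [← toRF_sub, ← toRF_sub, div_eq_mul_inv]
    exact ((isLU_toRF hq (hD _)).mul hq (isLU_toRF hq (hD _)).inv).zpow hq _

lemma critPoly_dvd_mul (d n j : ℕ) : critPoly d n ∣ critPoly d (n * j) := by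
  induction j with
  | zero => simp [critPoly]
  | succ j ih =>
    have e : critPoly d (n * (j + 1)) = orbDiff d (n * j) n + critPoly d (n * j) := by
      rw [orbDiff, mul_add, mul_one]; ring
    rw [e]
    refine dvd_add ?_ ih
    rw [orbDiff_eq_prod]
    exact Dvd.intro _ rfl

lemma not_mem_sq_of_local (hq : Irreducible q) {G P : ℤ[X]} {u : RF} (hu : IsLU d q u)
    (h : toRF G = toRF P * u) (hP : P ∉ locIdeal d q ^ 2) : G ∉ locIdeal d q ^ 2 := by
  intro hG
  obtain ⟨s, t, hs, ht, e⟩ := hu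
  have : G * t = s * P := by
    apply toRF_inj
    rw [toRF_mul, toRF_mul, h, ← e]; ring
  exact hP (loc_cancel hq hs (this ▸ Ideal.mul_mem_right _ _ hG))

lemma misiurewicz_not_mem_sq (hq : Irreducible q) {m n : ℕ} (hm : 2 ≤ m) (hn : 1 ≤ n)
    (hN : ∀ k, q ∣ redM d (critPoly d k) ↔ n ∣ k) {G : ℤ[X]} (hG : IsMisiurewicz d m n G) :
    G ∉ locIdeal d q ^ 2 := by
  obtain ⟨m, rfl⟩ : ∃ j, m = j + 2 := ⟨m - 2, by omega⟩
  have hD : ∀ j, orbDiff d j n ∈ locIdeal d q := by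
    intro j
    rw [mem_locIdeal, red_orbDiff]
    exact dvd_pow ((hN n).2 dvd_rfl) (pow_ne_zero _ hd.out.ne_zero)
  have hQ : ∀ j, orbQuot d j n ∈ locIdeal d q := by
    intro j
    have h := geom_congr _ _ _ d (hD j)
    have h' : (d : ℤ[X]) * critPoly d j ^ (d - 1) ∈ locIdeal d q :=
      Ideal.mul_mem_right _ _ natCast_mem_locIdeal
    have := Ideal.add_mem _ h h'
    rwa [sub_add_cancel] at this
  obtain ⟨u, hu, eu⟩ := FRat_local hq hn hN (m + 1)
  unfold IsMisiurewicz GRat at hG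
  by_cases hdvd : n ∣ m + 2 - 1
  · rw [if_pos hdvd] at hG
    obtain ⟨u', hu', eu'⟩ := FRat_local hq hn hN 0
    obtain ⟨j, hj⟩ := hdvd
    have hj : m + 1 = n * j := by omega
    obtain ⟨b, hb⟩ := critPoly_dvd_mul d n j
    rw [← hj] at hb
    have hcn : critPoly d n ∈ locIdeal d q := mem_locIdeal.2 ((hN n).2 dvd_rfl)
    have hbM : b ∉ locIdeal d q := by
      intro h
      apply sq_not_dvd d (m + 1) (by omega) q hq
      rw [hb, map_mul, pow_two]
      exact mul_dvd_mul (mem_locIdeal.1 hcn) (mem_locIdeal.1 h)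
    set W := ∏ j ∈ Finset.range (m + 1), orbQuot d j n with hW
    set P := ∑ i ∈ Finset.range d, (b + W) ^ i * b ^ (d - 1 - i) with hP
    have ha : critPoly d (m + 1 + n) = critPoly d n * (b + W) := by
      have := orbDiff_eq_prod d (m + 1) n
      rw [orbDiff, hb, ← hW] at this
      linear_combination this
    have hQP : orbQuot d (m + 1) n = critPoly d n ^ (d - 1) * P := by
      rw [orbQuot, ha, hb, hP, Finset.mul_sum]
      refine Finset.sum_congr rfl (fun i hi => ?_)
      have hi := Finset.mem_range.1 hi
      have e : critPoly d n ^ (d - 1) = critPoly d n ^ i * critPoly d n ^ (d - 1 - i) := by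
        rw [← pow_add]; congr 1; omega
      rw [e, mul_pow, mul_pow]; ring
    have hQ0 : orbQuot d 0 n = critPoly d n ^ (d - 1) := by
      have h := orbDiff_succ d 0 n
      have h2 : orbDiff d (0 + 1) n = critPoly d n ^ (d - 1) * critPoly d n := by
        rw [← pow_succ, Nat.sub_add_cancel hd.out.one_le]
        simp [orbDiff, add_comm 1 n, critPoly, hd.out.ne_zero]
      rw [h2, orbDiff_zero] at h
      exact (mul_right_cancel₀ (critPoly_monic d hd.out.two_le n hn).ne_zero h).symm
    have hc0 : toRF (critPoly d n ^ (d - 1)) ≠ 0 :=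
      toRF_ne (pow_ne_zero _ (critPoly_monic d hd.out.two_le n hn).ne_zero)
    have hu0 : u' ≠ 0 := by
      rintro rfl
      obtain ⟨s, t, hs, ht, h⟩ := hu'
      rw [zero_mul] at h
      exact toRF_ne (a := s) (fun h0 => hs (by rw [h0]; exact Ideal.zero_mem _)) h.symm
    have hGP : toRF G = toRF P * (u * u'⁻¹) := by
      rw [hG, eu', eu, hQP, hQ0, toRF_mul]
      field_simp
    refine not_mem_sq_of_local hq (hu.mul hq hu'.inv) hGP ?_
    by_cases hspecial : d = 2 ∧ m = 0
    · obtain ⟨rfl, rfl⟩ := hspecial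
      have hn1 : n = 1 := Nat.dvd_one.1 ⟨j, by omega⟩
      subst hn1
      have hX : critPoly 2 1 = X := by simp [critPoly]
      have hb1 : b = 1 := by
        rw [zero_add, hX] at hb
        exact (mul_left_cancel₀ X_ne_zero ((mul_one _).trans hb)).symm
      have hPX : P = X + 2 := by
        rw [hP, hW, hb1]
        simp [Finset.sum_range_succ, hQ0, hX]
        ring
      intro h
      have h1 := derivative_mem_of_mem_sq h
      rw [hPX] at h1
      simp only [derivative_add, derivative_X, derivative_ofNat, add_zero] at h1
      exact (locIdeal_isMaximal hq).ne_top ((Ideal.eq_top_iff_one _).2 h1)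
    · refine geom_not_mem_sq hq hbM ?_
      rw [add_sub_cancel_left, hW]
      rcases Nat.eq_zero_or_pos m with h0 | h0
      · subst h0
        have hd2 : 2 ≤ d - 1 := by
          have := hd.out.two_le
          by_contra hlt
          exact hspecial ⟨by omega, rfl⟩
        rw [zero_add, Finset.prod_range_one, hQ0]
        exact Ideal.pow_le_pow_right hd2 (Ideal.pow_mem_pow hcn _)
      · obtain ⟨l, rfl⟩ : ∃ l, m = l + 1 := ⟨m - 1, by omega⟩
        rw [Finset.prod_range_succ, Finset.prod_range_succ, mul_assoc, pow_two]
        exact Ideal.mul_mem_left _ _ (Ideal.mul_mem_mul (hQ _) (hQ _))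
  · rw [if_neg hdvd, eu] at hG
    refine not_mem_sq_of_local hq hu hG ?_
    refine geom_not_mem_sq hq (fun h => hdvd ((hN _).1 (mem_locIdeal.1 h))) ?_
    change orbDiff d (m + 1) n ∈ _
    rw [orbDiff_succ, pow_two]
    exact Ideal.mul_mem_mul (hQ m) (hD m)

end loc

/-! ### Counting -/

lemma card_le_of_not_mem_sq {d : ℕ} [hd : Fact d.Prime] (Y : (ZMod d)[X])
    (s : Multiset ℤ[X])
    (h1 : ∀ H ∈ s, ∃ q ∈ UniqueFactorizationMonoid.factors Y, q ∣ redM d H)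
    (h2 : ∀ q ∈ UniqueFactorizationMonoid.factors Y, s.prod ∉ locIdeal d q ^ 2) :
    Multiset.card s ≤ Multiset.card (UniqueFactorizationMonoid.factors Y) := by
  classical
  choose! g hg hg' using h1
  have hnd : ∀ t ≤ s, (t.map g).Nodup := by
    intro t
    induction t using Multiset.induction_on with
    | empty => simp
    | cons H t ih =>
      intro hle
      rw [Multiset.map_cons, Multiset.nodup_cons]
      refine ⟨?_, ih ((Multiset.le_cons_self t H).trans hle)⟩
      intro hmem
      obtain ⟨H', hH', e⟩ := Multiset.mem_map.1 hmem
      have hHs : H ∈ s := Multiset.mem_of_le hle (Multiset.mem_cons_self H t)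
      have hHs' : H' ∈ s := Multiset.mem_of_le hle (Multiset.mem_cons_of_mem hH')
      apply h2 (g H) (hg H hHs)
      have hdvd : H * H' ∣ s.prod := by
        refine dvd_trans ?_ (Multiset.prod_dvd_prod_of_le hle)
        rw [Multiset.prod_cons]
        exact mul_dvd_mul_left _ (Multiset.dvd_prod hH')
      refine Ideal.mem_of_dvd _ hdvd ?_
      rw [pow_two]
      exact Ideal.mul_mem_mul (mem_locIdeal.2 (hg' H hHs)) (mem_locIdeal.2 (e ▸ hg' H' hHs'))
  have hle : s.map g ≤ UniqueFactorizationMonoid.factors Y := by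
    rw [Multiset.le_iff_subset (hnd s le_rfl)]
    intro q hq
    obtain ⟨H, hH, rfl⟩ := Multiset.mem_map.1 hq
    exact hg H hH
  simpa using Multiset.card_le_card hle

lemma card_factors_map (G : ℤ[X]) (hG : G.Monic) :
    Multiset.card (UniqueFactorizationMonoid.factors (G.map (Int.castRingHom ℚ))) =
      Multiset.card (UniqueFactorizationMonoid.factors G) := by
  have hGQ : G.map (Int.castRingHom ℚ) ≠ 0 := (hG.map _).ne_zero
  have hrel : Multiset.Rel Associated (UniqueFactorizationMonoid.factors
      (G.map (Int.castRingHom ℚ)))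
      ((UniqueFactorizationMonoid.factors G).map (mapRingHom (Int.castRingHom ℚ))) := by
    apply UniqueFactorizationMonoid.factors_unique
    · exact fun x hx => UniqueFactorizationMonoid.irreducible_of_factor x hx
    · intro x hx
      obtain ⟨H, hH, rfl⟩ := Multiset.mem_map.1 hx
      have hirr := UniqueFactorizationMonoid.irreducible_of_factor H hH
      have hdvd := UniqueFactorizationMonoid.dvd_of_mem_factors hH
      have hprim : H.IsPrimitive := isPrimitive_of_dvd hG.isPrimitive hdvd
      exact (IsPrimitive.Int.irreducible_iff_irreducible_map_cast hprim).1 hirr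
    · refine (UniqueFactorizationMonoid.factors_prod hGQ).trans ?_
      rw [Multiset.prod_hom]
      exact ((UniqueFactorizationMonoid.factors_prod hG.ne_zero).map
        (mapRingHom (Int.castRingHom ℚ))).symm
  rw [Multiset.card_eq_card_of_rel hrel, Multiset.card_map]

/-- For a prime `d` and `m ≥ 2`, `n ≥ 1`, the number of irreducible factors
of `G_{d,m,n}` over `ℚ` is at most the number of irreducible factors of the reduction of
`G_{d,0,n}` modulo `d` over `𝔽_d`. -/
theorem misiurewicz_factor_count_le (d m n : ℕ) [hd : Fact d.Prime] (hm : 2 ≤ m) (hn : 1 ≤ n)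
    (G G0 : Polynomial ℤ) (hG : IsMisiurewicz d m n G) (hG0 : IsG0 d n G0) :
    Multiset.card (UniqueFactorizationMonoid.factors (G.map (Int.castRingHom ℚ))) ≤
      Multiset.card (UniqueFactorizationMonoid.factors (G0.map (Int.castRingHom (ZMod d)))) := by
  have hX : Irreducible (X : (ZMod d)[X]) := irreducible_X
  obtain ⟨N, hN⟩ := exists_period d (X : (ZMod d)[X])
  have hGm : G.Monic := by
    obtain ⟨w, hw⟩ := hasVal_GRat hX hN m n hn (by omega)
    rw [← hG] at hw
    exact (hw.eq hX).1
  have hG0m : G0.Monic := by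
    have hw := hasVal_G0Rat hX hN n hn
    rw [← hG0] at hw
    exact (hw.eq hX).1
  have hY : G0.map (Int.castRingHom (ZMod d)) ≠ 0 := (hG0m.map _).ne_zero
  have hper : ∀ q : (ZMod d)[X], Irreducible q → q ∣ redM d G →
      (∀ k, q ∣ redM d (critPoly d k) ↔ n ∣ k) ∧ q ∣ redM d G0 := by
    intro q hq hdvd
    obtain ⟨N, hN⟩ := exists_period d q
    have hw0 := hasVal_G0Rat hq hN n hn
    obtain ⟨w, hw⟩ := hasVal_GRat hq hN m n hn (by omega)
    rw [← hG] at hw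
    rw [← hG0] at hw0
    have e := (hw.eq hq).2
    have e0 := (hw0.eq hq).2
    by_cases hnN : n = N
    · subst hnN
      refine ⟨hN, ?_⟩
      by_contra hnd
      rw [multiplicity_eq_zero.2 hnd] at e0
      simp at e0
    · rw [if_neg hnN, mul_zero] at e
      exact absurd hdvd (multiplicity_eq_zero.1 (by exact_mod_cast e))
  rw [card_factors_map G hGm]
  have hassoc := UniqueFactorizationMonoid.factors_prod hGm.ne_zero
  apply card_le_of_not_mem_sq
  · intro H hH
    have hirr := UniqueFactorizationMonoid.irreducible_of_factor H hH
    have hdvd := UniqueFactorizationMonoid.dvd_of_mem_factors hH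
    have hlc := hGm.isUnit_leadingCoeff_of_dvd hdvd
    have hpos := degree_pos_of_not_isUnit_of_dvd_monic hGm hirr.not_isUnit hdvd
    have hdeg : (redM d H).degree = H.degree :=
      degree_map_eq_of_leadingCoeff_ne_zero _ (hlc.map _).ne_zero
    have hnu : ¬ IsUnit (redM d H) := by
      intro hu
      rw [← hdeg, degree_eq_zero_of_isUnit hu] at hpos
      exact lt_irrefl _ hpos
    have hne : redM d H ≠ 0 := by
      intro h0
      rw [← hdeg, h0, degree_zero] at hpos
      exact absurd hpos (by simp)
    obtain ⟨q, hq, hqH⟩ := WfDvdMonoid.exists_irreducible_factor hnu hne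
    obtain ⟨q', hq', ha⟩ := UniqueFactorizationMonoid.exists_mem_factors_of_dvd hY hq
      (hper q hq (hqH.trans (_root_.map_dvd (redM d) hdvd))).2
    exact ⟨q', hq', ha.symm.dvd.trans hqH⟩
  · intro q hqf hmem
    have hq := UniqueFactorizationMonoid.irreducible_of_factor q hqf
    have hmemG : G ∈ locIdeal d q ^ 2 := Ideal.mem_of_dvd _ hassoc.dvd hmem
    have hdvd : q ∣ redM d G := mem_locIdeal.1 (Ideal.pow_le_self two_ne_zero hmemG)
    exact misiurewicz_not_mem_sq hq hm hn (hper q hq hdvd).1 hG hmemG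
end
end

section
/- Let d be a rational prime and let m ≥ 2, n ≥ 1 be integers. If the reduction G̅_{d,0,n}(c) ∈ 𝔽_d[c] of G_{d,0,n}(c) modulo d is irreducible over 𝔽_d, then G_{d,m,n}(c) is irreducible over ℚ. -/
open Polynomial

noncomputable section

/-- Product of the factors with positive Möbius exponent. -/
def PP {R : Type*} [CommMonoid R] (n : ℕ) (u : ℕ → R) : R :=
  ∏ k ∈ n.divisors, u k ^ (ArithmeticFunction.moebius (n / k)).toNat

/-- Product of the factors with negative Möbius exponent. -/
def PM {R : Type*} [CommMonoid R] (n : ℕ) (u : ℕ → R) : R :=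
  ∏ k ∈ n.divisors, u k ^ (-ArithmeticFunction.moebius (n / k)).toNat

/-- Product of the factors with positive Möbius exponent, without the factor `k = n`. -/
def PQ {R : Type*} [CommMonoid R] (n : ℕ) (u : ℕ → R) : R :=
  ∏ k ∈ n.divisors.erase n, u k ^ (ArithmeticFunction.moebius (n / k)).toNat

lemma PP_eq {R : Type*} [CommMonoid R] {n : ℕ} (hn : 1 ≤ n) (u : ℕ → R) :
    PP n u = u n * PQ n u := by
  unfold PP PQ
  rw [← Finset.mul_prod_erase n.divisors _ (a := n) (by simp; omega)]
  simp [Nat.div_self hn]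

lemma toRF_eq_zpow {n : ℕ} (q : ℤ[X]) (u : ℕ → ℤ[X]) (hu : ∀ k ∈ n.divisors, u k ≠ 0)
    (h : toRF q = ∏ k ∈ n.divisors, toRF (u k) ^ (ArithmeticFunction.moebius (n / k))) :
    q * PM n u = PP n u := by
  apply IsFractionRing.injective ℤ[X] RF
  rw [map_mul]
  change toRF q * _ = _
  rw [h]
  unfold PM PP
  rw [map_prod, map_prod, ← Finset.prod_mul_distrib]
  refine Finset.prod_congr rfl fun k hk => ?_
  have h0 : toRF (u k) ≠ 0 := by
    unfold toRF
    simpa using hu k hk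
  rw [map_pow, map_pow]
  change _ * (toRF (u k)) ^ _ = (toRF (u k)) ^ _
  rw [← zpow_natCast, ← zpow_natCast, ← zpow_add₀ h0]
  congr 1
  omega

lemma PM_map {R S : Type*} [CommSemiring R] [CommSemiring S] (φ : R →+* S) (n : ℕ) (u : ℕ → R) :
    φ (PM n u) = PM n (fun k => φ (u k)) := by
  simp [PM]

lemma PP_map {R S : Type*} [CommSemiring R] [CommSemiring S] (φ : R →+* S) (n : ℕ) (u : ℕ → R) :
    φ (PP n u) = PP n (fun k => φ (u k)) := by
  simp [PP]

lemma PQ_map {R S : Type*} [CommSemiring R] [CommSemiring S] (φ : R →+* S) (n : ℕ) (u : ℕ → R) :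
    φ (PQ n u) = PQ n (fun k => φ (u k)) := by
  simp [PQ]

lemma PM_pow {R : Type*} [CommMonoid R] (n M : ℕ) (u : ℕ → R) :
    PM n (fun k => u k ^ M) = PM n u ^ M := by
  unfold PM
  rw [← Finset.prod_pow]
  exact Finset.prod_congr rfl fun k _ => pow_right_comm _ _ _

lemma PP_pow {R : Type*} [CommMonoid R] (n M : ℕ) (u : ℕ → R) :
    PP n (fun k => u k ^ M) = PP n u ^ M := by
  unfold PP
  rw [← Finset.prod_pow]
  exact Finset.prod_congr rfl fun k _ => pow_right_comm _ _ _

lemma PM_congr {R : Type*} [CommMonoid R] {n : ℕ} {u v : ℕ → R} (h : ∀ k ∈ n.divisors, u k = v k) :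
    PM n u = PM n v :=
  Finset.prod_congr rfl fun k hk => by rw [h k hk]

lemma PP_congr {R : Type*} [CommMonoid R] {n : ℕ} {u v : ℕ → R} (h : ∀ k ∈ n.divisors, u k = v k) :
    PP n u = PP n v :=
  Finset.prod_congr rfl fun k hk => by rw [h k hk]

lemma PM_ne_zero {R : Type*} [CommRing R] [IsDomain R] {n : ℕ} (hn : 1 ≤ n) {u : ℕ → R}
    (h : ∀ k ∈ n.divisors, k ≠ n → u k ≠ 0) : PM n u ≠ 0 := by
  unfold PM
  refine Finset.prod_ne_zero_iff.2 fun k hk => ?_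
  by_cases hkn : k = n
  · subst hkn; simp [Nat.div_self hn]
  · exact pow_ne_zero _ (h k hk hkn)

lemma PQ_ne_zero {R : Type*} [CommRing R] [IsDomain R] {n : ℕ} {u : ℕ → R}
    (h : ∀ k ∈ n.divisors, k ≠ n → u k ≠ 0) : PQ n u ≠ 0 := by
  unfold PQ
  refine Finset.prod_ne_zero_iff.2 fun k hk => ?_
  rw [Finset.mem_erase] at hk
  exact pow_ne_zero _ (h k hk.2 hk.1)

lemma PM_monic {n : ℕ} {u : ℕ → ℤ[X]} (h : ∀ k ∈ n.divisors, (u k).Monic) : (PM n u).Monic :=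
  monic_prod_of_monic _ _ fun k hk => (h k hk).pow _

lemma PP_monic {n : ℕ} {u : ℕ → ℤ[X]} (h : ∀ k ∈ n.divisors, (u k).Monic) : (PP n u).Monic :=
  monic_prod_of_monic _ _ fun k hk => (h k hk).pow _

/-! Basic facts on `critPoly`. -/

lemma crit_monic_deg {d : ℕ} (hd : 2 ≤ d) (k : ℕ) :
    (critPoly d (k + 1)).Monic ∧ (critPoly d (k + 1)).natDegree = d ^ k := by
  induction k with
  | zero =>
    have : critPoly d 1 = X := by simp [critPoly, show d ≠ 0 by omega]
    simp [this, monic_X]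
  | succ k ih =>
    have e : critPoly d (k + 1 + 1) = critPoly d (k + 1) ^ d + X := rfl
    have hdeg : (critPoly d (k + 1) ^ d).natDegree = d ^ (k + 1) := by
      rw [ih.1.natDegree_pow, ih.2, pow_succ, mul_comm]
    have hlt : (X : ℤ[X]).natDegree < (critPoly d (k + 1) ^ d).natDegree := by
      rw [hdeg, natDegree_X]
      exact Nat.one_lt_pow (by omega) (by omega)
    rw [e]
    refine ⟨(ih.1.pow d).add_of_left (degree_lt_degree hlt), ?_⟩
    rw [natDegree_add_eq_left_of_natDegree_lt hlt, hdeg]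

lemma crit_monic {d : ℕ} (hd : 2 ≤ d) {k : ℕ} (hk : 1 ≤ k) : (critPoly d k).Monic := by
  obtain ⟨k, rfl⟩ := Nat.exists_eq_add_of_le' hk
  exact (crit_monic_deg hd k).1

lemma crit_sub_monic {d : ℕ} (hd : 2 ≤ d) (l : ℕ) {k : ℕ} (hk : 1 ≤ k) :
    (critPoly d (l + k) - critPoly d l).Monic := by
  refine (crit_monic hd (by omega)).sub_of_left ?_
  apply degree_lt_degree
  obtain ⟨k, rfl⟩ := Nat.exists_eq_add_of_le' hk
  rw [← add_assoc, (crit_monic_deg hd _).2]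
  rcases l with _ | l
  · have : 0 < d ^ (0 + k) := Nat.pow_pos (by omega)
    simpa [critPoly] using this
  · rw [(crit_monic_deg hd _).2]
    exact Nat.pow_lt_pow_right (by omega) (by omega)

lemma crit_sub_succ (d i j : ℕ) : critPoly d (i + 1) - critPoly d (j + 1) =
    critPoly d i ^ d - critPoly d j ^ d := by
  simp [critPoly]

/-- The quotient `(x^d - y^d)/(x - y)`. -/
def QQ {R : Type*} [CommRing R] (d : ℕ) (x y : R) : R :=
  ∑ i ∈ Finset.range d, x ^ i * y ^ (d - 1 - i)

lemma QQ_mul {R : Type*} [CommRing R] (d : ℕ) (x y : R) : QQ d x y * (x - y) = x ^ d - y ^ d :=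
  (Commute.all x y).geom_sum₂_mul d

lemma QQ_self {R : Type*} [CommRing R] {d : ℕ} (y : R) : QQ d y y = d * y ^ (d - 1) := by
  unfold QQ
  rw [Finset.sum_congr rfl (g := fun _ => y ^ (d - 1))]
  · simp
  · intro i hi
    rw [← pow_add]
    congr 1
    have := Finset.mem_range.1 hi
    omega

lemma QQ_scale {R : Type*} [CommRing R] (d : ℕ) (a x y : R) :
    QQ d (a * x) (a * y) = a ^ (d - 1) * QQ d x y := by
  unfold QQ
  rw [Finset.mul_sum]
  refine Finset.sum_congr rfl fun i hi => ?_
  have := Finset.mem_range.1 hi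
  have e : d - 1 = i + (d - 1 - i) := by omega
  conv_rhs => rw [e, pow_add, ← e]
  rw [mul_pow, mul_pow]; ring

lemma QQ_map {R S : Type*} [CommRing R] [CommRing S] (φ : R →+* S) (d : ℕ) (x y : R) :
    φ (QQ d x y) = QQ d (φ x) (φ y) := by
  simp [QQ]

lemma QQ_dvd {R : Type*} [CommRing R] (d : ℕ) {a x y z : R} (hx : a ∣ x - z) (hy : a ∣ y - z) :
    a ∣ QQ d x y - d * z ^ (d - 1) := by
  rw [← Ideal.mem_span_singleton, ← Ideal.Quotient.eq] at *
  rw [QQ_map, hx, hy, QQ_self]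
  simp

lemma crit_sub_eq (d l k : ℕ) : critPoly d (l + 1 + k) - critPoly d (l + 1) =
    QQ d (critPoly d (l + k)) (critPoly d l) * (critPoly d (l + k) - critPoly d l) := by
  rw [QQ_mul, ← crit_sub_succ]
  congr 2; omega

lemma crit_dvd_sub (d n i : ℕ) : critPoly d n ∣ critPoly d (i + n) - critPoly d i := by
  induction i with
  | zero => simp [critPoly]
  | succ i ih =>
    rw [show i + 1 + n = i + n + 1 by ring, crit_sub_succ]
    exact ih.trans (sub_dvd_pow_sub_pow _ _ _)

lemma crit_sq_dvd_sub {d : ℕ} (hd : 2 ≤ d) (n i : ℕ) :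
    critPoly d n ^ 2 ∣ critPoly d (i + 1 + n) - critPoly d (i + 1) := by
  induction i with
  | zero =>
    rw [show 0 + 1 + n = n + 1 by ring, crit_sub_succ]
    simp only [critPoly, zero_pow (show d ≠ 0 by omega), sub_zero]
    exact pow_dvd_pow _ hd
  | succ i ih =>
    rw [show i + 1 + 1 + n = i + 1 + n + 1 by ring, crit_sub_succ]
    exact ih.trans (sub_dvd_pow_sub_pow _ _ _)

lemma crit_mul {d n : ℕ} (hd : 2 ≤ d) (hn : 1 ≤ n) (j : ℕ) :
    critPoly d n ^ 2 ∣ critPoly d (n * (j + 1)) - critPoly d n := by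
  induction j with
  | zero => simp
  | succ j ih =>
    have := crit_sq_dvd_sub hd n (n * (j + 1) - 1)
    have h1 : 1 ≤ n * (j + 1) := Nat.mul_pos hn (by omega)
    rw [Nat.sub_add_cancel h1] at this
    have h2 := dvd_add this ih
    rw [sub_add_sub_cancel] at h2
    exact h2

lemma crit_mul' {d n : ℕ} (hd : 2 ≤ d) (hn : 1 ≤ n) (j : ℕ) :
    ∃ u, critPoly d (n * (j + 1)) = critPoly d n * u ∧ critPoly d n ∣ u - 1 := by
  obtain ⟨w, hw⟩ := crit_mul hd hn j
  refine ⟨1 + critPoly d n * w, ?_, ?_⟩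
  · linear_combination hw
  · simp

/-! Reduction mod `d`. -/

/-- reduction mod `d` -/
abbrev red (d : ℕ) : ℤ[X] →+* (ZMod d)[X] := mapRingHom (Int.castRingHom (ZMod d))

lemma red_sub (d : ℕ) [hd : Fact d.Prime] (l k : ℕ) :
    red d (critPoly d (l + k) - critPoly d l) = red d (critPoly d k) ^ d ^ l := by
  induction l with
  | zero => simp [critPoly]
  | succ l ih =>
    rw [show l + 1 + k = l + k + 1 by ring, crit_sub_succ, map_sub, map_pow, map_pow,
      ← sub_pow_char, ← map_sub, ih, ← pow_mul, pow_succ]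

lemma red_ne_zero (d : ℕ) [hd : Fact d.Prime] {k : ℕ} (hk : 1 ≤ k) : red d (critPoly d k) ≠ 0 :=
  ((crit_monic hd.out.two_le hk).map _).ne_zero

lemma red_QQ (d : ℕ) [hd : Fact d.Prime] (l : ℕ) {k : ℕ} (hk : 1 ≤ k) :
    red d (QQ d (critPoly d (l + k)) (critPoly d l)) =
      red d (critPoly d k) ^ (d ^ l * (d - 1)) := by
  have h0 : red d (critPoly d k) ^ d ^ l ≠ 0 := pow_ne_zero _ (red_ne_zero d hk)
  apply mul_right_cancel₀ h0
  conv_lhs => rw [← red_sub, ← map_mul, ← crit_sub_eq, red_sub]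
  rw [← pow_add]
  congr 1
  obtain ⟨e, he⟩ : ∃ e, d = e + 1 := ⟨d - 1, by have := hd.out.two_le; omega⟩
  rw [pow_succ]
  conv_lhs => rw [mul_comm, ← Nat.sub_add_cancel hd.out.one_le, add_mul, one_mul, mul_comm]
  rw [Nat.sub_add_cancel hd.out.one_le]

lemma red_deriv (d : ℕ) [hd : Fact d.Prime] {k : ℕ} (hk : 1 ≤ k) :
    derivative (red d (critPoly d k)) = 1 := by
  obtain ⟨k, rfl⟩ := Nat.exists_eq_add_of_le' hk
  simp [critPoly, derivative_pow]

/-- The key combinatorial fact: `0` has exact period `n` modulo `G0`. -/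
lemma g_dvd_iff (d n : ℕ) [hd : Fact d.Prime] (hn : 1 ≤ n) (g : (ZMod d)[X]) (hg : Irreducible g)
    (h : g * PM n (fun k => red d (critPoly d k)) = PP n (fun k => red d (critPoly d k))) (j : ℕ) :
    g ∣ red d (critPoly d j) ↔ n ∣ j := by
  classical
  have : Fact (Irreducible g) := ⟨hg⟩
  let f : AdjoinRoot g → AdjoinRoot g := fun x => x ^ d + AdjoinRoot.root g
  have hf : ∀ j, AdjoinRoot.mk g (red d (critPoly d j)) = f^[j] 0 := by
    intro j
    induction j with
    | zero => simp [critPoly]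
    | succ j ih =>
      rw [Function.iterate_succ_apply', ← ih]
      simp [critPoly, f]
  set r := Function.minimalPeriod f 0 with hr
  have hdvd : ∀ j, g ∣ red d (critPoly d j) ↔ r ∣ j := by
    intro j
    rw [← AdjoinRoot.mk_eq_zero, hf, hr, ← Function.isPeriodicPt_iff_minimalPeriod_dvd]
    rfl
  suffices r = n by rw [hdvd, this]
  have hmul : ∀ k ∈ n.divisors, emultiplicity g (red d (critPoly d k)) =
      ((if r ∣ k then 1 else 0 : ℕ) : ℕ∞) := by
    intro k hk
    have hk1 : 1 ≤ k := Nat.pos_of_mem_divisors hk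
    split_ifs with hrk
    · refine emultiplicity_eq_coe.2 ⟨by rw [pow_one]; exact (hdvd k).2 hrk, ?_⟩
      rintro ⟨w, hw⟩
      have h1 := red_deriv d hk1
      rw [hw] at h1
      apply hg.not_isUnit
      apply isUnit_of_dvd_one
      rw [← h1]
      simp only [derivative_mul, derivative_pow]
      refine dvd_add (Dvd.dvd.mul_right (Dvd.dvd.mul_right (Dvd.dvd.mul_left ?_ _) _) _)
        (Dvd.dvd.mul_right ?_ _)
      · simp
      · exact dvd_pow_self _ (by norm_num)
    · exact_mod_cast emultiplicity_eq_zero.2 (fun hh => hrk ((hdvd k).1 hh))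
  have hcount := congrArg (emultiplicity g) h
  unfold PM PP at hcount
  rw [emultiplicity_mul hg.prime, Finset.emultiplicity_prod hg.prime,
    Finset.emultiplicity_prod hg.prime] at hcount
  simp only [emultiplicity_pow hg.prime] at hcount
  have hsum : ∀ e : ℕ → ℕ, ∑ k ∈ n.divisors, (e k : ℕ∞) * emultiplicity g (red d (critPoly d k)) =
      ((∑ k ∈ n.divisors, e k * (if r ∣ k then 1 else 0) : ℕ) : ℕ∞) := by
    intro e
    rw [Nat.cast_sum]
    refine Finset.sum_congr rfl fun k hk => ?_
    rw [hmul k hk, Nat.cast_mul]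
  rw [hsum (fun k => (-ArithmeticFunction.moebius (n / k)).toNat),
    hsum (fun k => (ArithmeticFunction.moebius (n / k)).toNat)] at hcount
  have h1 : emultiplicity g g = ((1 : ℕ) : ℕ∞) := by
    refine emultiplicity_eq_coe.2 ⟨by simp, ?_⟩
    rintro ⟨w, hw⟩
    apply hg.not_isUnit
    apply isUnit_of_dvd_one
    refine ⟨w, mul_left_cancel₀ hg.ne_zero ?_⟩
    linear_combination hw
  rw [h1] at hcount
  have hc2 : 1 + ∑ k ∈ n.divisors, (-ArithmeticFunction.moebius (n / k)).toNat *
      (if r ∣ k then 1 else 0) = ∑ k ∈ n.divisors, (ArithmeticFunction.moebius (n / k)).toNat *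
      (if r ∣ k then 1 else 0) := by
    exact_mod_cast hcount
  have hc3 : ∑ k ∈ n.divisors, ArithmeticFunction.moebius (n / k) * (if r ∣ k then (1:ℤ) else 0)
      = 1 := by
    have hz := congrArg (Nat.cast : ℕ → ℤ) hc2
    push_cast at hz
    refine Eq.trans ?_ (sub_eq_iff_eq_add.2 hz.symm)
    rw [← Finset.sum_sub_distrib]
    refine Finset.sum_congr rfl fun k _ => ?_
    rw [← sub_mul]
    congr 1
    omega
  have hM := (ArithmeticFunction.sum_eq_iff_sum_mul_moebius_eq (R := ℤ)
    (f := fun i => if i = r then 1 else 0) (g := fun i => if r ∣ i then 1 else 0)).1 (by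
      intro N hN
      simp [hN.ne']) n hn
  simp only [Int.cast_id] at hM
  rw [Nat.sum_divisorsAntidiagonal' (fun a b =>
    (ArithmeticFunction.moebius a : ℤ) * (if r ∣ b then (1:ℤ) else 0))] at hM
  rw [hc3] at hM
  by_contra hne
  simp [Ne.symm hne] at hM

lemma FRat_eq (d l n : ℕ) (hd : 2 ≤ d) : FRat d (l + 1) n =
    ∏ k ∈ n.divisors, toRF (QQ d (critPoly d (l + k)) (critPoly d l)) ^
      (ArithmeticFunction.moebius (n / k)) := by
  unfold FRat
  refine Finset.prod_congr rfl fun k hk => ?_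
  have hk1 : 1 ≤ k := Nat.pos_of_mem_divisors hk
  congr 1
  rw [Nat.add_sub_cancel]
  unfold toRF
  rw [← map_sub, ← map_sub, crit_sub_eq, map_mul]
  apply mul_div_cancel_right₀
  rw [Ne, FaithfulSMul.algebraMap_eq_zero_iff]
  exact (crit_sub_monic hd l hk1).ne_zero

lemma FRat_one (d n : ℕ) (hd : 2 ≤ d) : FRat d 1 n = G0Rat d n ^ (d - 1) := by
  rw [show 1 = 0 + 1 from rfl, FRat_eq d 0 n hd, G0Rat, ← Finset.prod_pow]
  refine Finset.prod_congr rfl fun k hk => ?_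
  have : QQ d (critPoly d (0 + k)) (critPoly d 0) = critPoly d k ^ (d - 1) := by
    have hk1 : 1 ≤ k := Nat.pos_of_mem_divisors hk
    apply mul_right_cancel₀ (crit_monic hd hk1).ne_zero
    have := QQ_mul d (critPoly d (0 + k)) (critPoly d 0)
    simp only [critPoly, sub_zero, zero_add, zero_pow (show d ≠ 0 by omega)] at this ⊢
    rw [this, ← pow_succ, Nat.sub_add_cancel (by omega)]
  rw [this]
  unfold toRF
  rw [map_pow, ← zpow_natCast, ← zpow_natCast, zpow_comm]

/-- Kernel of `ℤ[c] → 𝔽_d[c]/(G0)` is `(d, G0)`. -/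
lemma mem_P (d : ℕ) [hd : Fact d.Prime] (G0 q : ℤ[X]) (h : red d G0 ∣ red d q) :
    ∃ s t : ℤ[X], q = (d : ℤ[X]) * s + G0 * t := by
  obtain ⟨w, hw⟩ := h
  obtain ⟨t, rfl⟩ : ∃ t, red d t = w :=
    map_surjective (Int.castRingHom (ZMod d)) (ZMod.ringHom_surjective _) w
  rw [← map_mul, ← sub_eq_zero, ← map_sub] at hw
  have : C (d : ℤ) ∣ q - G0 * t := by
    rw [C_dvd_iff_dvd_coeff]
    intro i
    have := congrArg (fun p => coeff p i) hw
    simp only [coe_mapRingHom, coeff_map, coeff_zero, eq_intCast] at this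
    exact (ZMod.intCast_zmod_eq_zero_iff_dvd _ _).1 this
  obtain ⟨s, hs⟩ := this
  refine ⟨s, t, ?_⟩
  rw [sub_eq_iff_eq_add] at hs
  rw [hs]
  simp

/-- A Schönemann-type irreducibility criterion. -/
lemma criterion (d : ℕ) [hd : Fact d.Prime] (G G0 : ℤ[X]) (hG : G.Monic) (hG0 : G0.Monic)
    (hirr : Irreducible (red d G0)) (M : ℕ) (hM : red d G ∣ red d G0 ^ M)
    (S T W : ℤ[X]) (hS : ¬ red d G0 ∣ red d S) (hT : ¬ red d G0 ∣ red d T)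
    (h : G * S = d * T + G0 * W) : Irreducible G := by
  have hdz : red d (d : ℤ[X]) = 0 := by
    rw [map_natCast]
    exact CharP.cast_eq_zero _ _
  have key : ∀ A : ℤ[X], A.Monic → A ≠ 1 → A ∣ G → red d G0 ∣ red d A := by
    intro A hA hA1 hAG
    obtain ⟨i, -, hi⟩ := (dvd_prime_pow hirr.prime M).1 ((map_dvd (red d) hAG).trans hM)
    rcases Nat.eq_zero_or_pos i with rfl | hi0
    · exfalso
      rw [pow_zero, associated_one_iff_isUnit] at hi
      have h1 : (red d A).Monic := hA.map _
      have h2 := congrArg natDegree ((Monic.isUnit_iff h1).1 hi)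
      have h3 : (red d A).natDegree = A.natDegree := hA.natDegree_map _
      exact hA1 (eq_one_of_monic_natDegree_zero hA (h3.symm.trans (h2.trans natDegree_one)))
    · exact (dvd_pow_self _ hi0.ne').trans hi.symm.dvd
  refine (irreducible_of_monic hG ?_).2 ?_
  · rintro rfl
    apply hS
    rw [one_mul] at h
    rw [h, map_add, map_mul, map_mul, hdz, zero_mul, zero_add]
    exact dvd_mul_right _ _
  · intro A B hA hB hAB
    by_contra! hne
    obtain ⟨a1, a2, ha⟩ := mem_P d G0 A (key A hA hne.1 ⟨B, hAB.symm⟩)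
    obtain ⟨b1, b2, hb⟩ := mem_P d G0 B (key B hB hne.2 ⟨A, by rw [← hAB, mul_comm]⟩)
    have h1 : (d : ℤ[X]) * (T - d * (a1 * b1 * S)) =
        G0 * ((a2 * B + d * a1 * b2) * S - W) := by
      rw [← hAB] at h
      have hAB' : A * B = d * d * (a1 * b1) + G0 * (a2 * B + d * a1 * b2) := by
        conv_lhs => rw [ha]
        have : (d : ℤ[X]) * a1 * B = d * a1 * (d * b1 + G0 * b2) := by rw [← hb]
        linear_combination this
      rw [hAB'] at h
      linear_combination -h
    have hdvd : G0 ∣ T - d * (a1 * b1 * S) := by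
      -- reduce to: `d` divides the cofactor
      have h2 := congrArg (red d) h1
      rw [map_mul, map_mul, hdz, zero_mul] at h2
      have h3 : red d ((a2 * B + d * a1 * b2) * S - W) = 0 :=
        (mul_eq_zero.1 h2.symm).resolve_left hirr.ne_zero
      obtain ⟨s, t, hst⟩ := mem_P d 0 _ (by rw [h3]; exact dvd_zero _)
      rw [hst] at h1
      refine ⟨s, ?_⟩
      have hd0 : (d : ℤ[X]) ≠ 0 := by exact_mod_cast hd.out.ne_zero
      apply mul_left_cancel₀ hd0
      linear_combination h1
    apply hT
    have h4 := map_dvd (red d) hdvd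
    rw [map_sub, map_mul, hdz, zero_mul, sub_zero] at h4
    exact h4

/-- For a prime `d` and `m ≥ 2`, `n ≥ 1`, if the reduction of `G_{d,0,n}`
modulo `d` is irreducible over `𝔽_d`, then `G_{d,m,n}` is irreducible over `ℚ`. -/
theorem misiurewicz_irreducible_of_reduction_irreducible (d m n : ℕ) [hd : Fact d.Prime]
    (hm : 2 ≤ m) (hn : 1 ≤ n)
    (G G0 : Polynomial ℤ) (hG : IsMisiurewicz d m n G) (hG0 : IsG0 d n G0)
    (hirr : Irreducible (G0.map (Int.castRingHom (ZMod d)))) :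
    Irreducible (G.map (Int.castRingHom ℚ)) := by
  have hd2 : 2 ≤ d := hd.out.two_le
  obtain ⟨l, rfl⟩ : ∃ l, m = l + 1 := ⟨m - 1, by omega⟩
  have hl : 1 ≤ l := by omega
  change Irreducible (red d G0) at hirr
  have hpos : ∀ k ∈ n.divisors, 1 ≤ k := fun k hk => Nat.pos_of_mem_divisors hk
  -- the equation for `G0`
  set a : ℕ → ℤ[X] := critPoly d with ha
  have hamon : ∀ k ∈ n.divisors, (a k).Monic := fun k hk => crit_monic hd2 (hpos k hk)
  have e0 : G0 * PM n a = PP n a :=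
    toRF_eq_zpow G0 a (fun k hk => (hamon k hk).ne_zero) hG0
  have hG0m : G0.Monic := by
    refine (PM_monic hamon).of_mul_monic_left ?_
    rw [mul_comm, e0]
    exact PP_monic hamon
  have e0r : red d G0 * PM n (fun k => red d (a k)) = PP n (fun k => red d (a k)) := by
    rw [← PM_map, ← PP_map, ← map_mul, e0]
  have hper : ∀ j, red d G0 ∣ red d (a j) ↔ n ∣ j := g_dvd_iff d n hn _ hirr e0r
  -- the residue field
  have : Fact (Irreducible (red d G0)) := ⟨hirr⟩
  set φ : ℤ[X] →+* AdjoinRoot (red d G0) := (AdjoinRoot.mk (red d G0)).comp (red d) with hφ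
  have hφ0 : ∀ q, φ q = 0 ↔ red d G0 ∣ red d q := fun q => AdjoinRoot.mk_eq_zero
  have hφa : ∀ k ∈ n.divisors, k ≠ n → φ (a k) ≠ 0 := by
    intro k hk hkn h
    rw [hφ0, hper] at h
    exact hkn (Nat.dvd_antisymm (Nat.dvd_of_mem_divisors hk) h)
  -- the `Q` polynomials
  set Q : ℕ → ℤ[X] := fun k => QQ d (a (l + k)) (a l) with hQ
  have hQmon : ∀ k ∈ n.divisors, (Q k).Monic := by
    intro k hk
    refine (crit_sub_monic hd2 l (hpos k hk)).of_mul_monic_left ?_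
    rw [mul_comm, ← crit_sub_eq]
    exact crit_sub_monic hd2 _ (hpos k hk)
  have hQred : ∀ k ∈ n.divisors, red d (Q k) = red d (a k) ^ (d ^ l * (d - 1)) :=
    fun k hk => red_QQ d l (hpos k hk)
  have hφQ : ∀ k ∈ n.divisors, k ≠ n → φ (Q k) ≠ 0 := by
    intro k hk hkn
    have : φ (Q k) = φ (a k) ^ (d ^ l * (d - 1)) := by
      simp only [hφ, RingHom.comp_apply, hQred k hk, map_pow]
    rw [this]
    exact pow_ne_zero _ (hφa k hk hkn)
  -- properties of any `H` with `toRF H = FRat`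
  have hH : ∀ H : ℤ[X], toRF H = FRat d (l + 1) n →
      H * PM n Q = Q n * PQ n Q ∧ H.Monic ∧ red d H = red d G0 ^ (d ^ l * (d - 1)) := by
    intro H hH
    rw [FRat_eq d l n hd2] at hH
    have eH : H * PM n Q = PP n Q :=
      toRF_eq_zpow H Q (fun k hk => (hQmon k hk).ne_zero) hH
    refine ⟨by rw [eH, PP_eq hn], ?_, ?_⟩
    · refine (PM_monic hQmon).of_mul_monic_left ?_
      rw [mul_comm, eH]
      exact PP_monic hQmon
    · have h1 := congrArg (red d) eH
      rw [map_mul, PM_map, PP_map, PM_congr hQred, PP_congr hQred, PM_pow, PP_pow, ← e0r,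
        mul_pow] at h1
      refine mul_right_cancel₀ (pow_ne_zero _ ?_) h1
      rw [← PM_map]
      exact ((PM_monic hamon).map _).ne_zero
  have hSQ : φ (PM n Q) ≠ 0 := by rw [PM_map]; exact PM_ne_zero hn hφQ
  have hTQ : φ (PQ n Q) ≠ 0 := by rw [PQ_map]; exact PQ_ne_zero hφQ
  have hSa : φ (PM n a) ≠ 0 := by rw [PM_map]; exact PM_ne_zero hn hφa
  have hTa : φ (PQ n a) ≠ 0 := by rw [PQ_map]; exact PQ_ne_zero hφa
  rw [PP_eq hn] at e0
  -- it suffices to find the congruence modulo `a n`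
  have finish : ∀ (M : ℕ) (S T W : ℤ[X]), G.Monic → red d G ∣ red d G0 ^ M → φ S ≠ 0 → φ T ≠ 0 →
      G * S = d * T + a n * W → Irreducible G := by
    intro M S T W hGm hM hS hT h
    refine criterion d G G0 hGm hG0m hirr M hM (S * PQ n a) (T * PQ n a) (W * PM n a) ?_ ?_ ?_
    · rw [← hφ0, map_mul]; exact mul_ne_zero hS hTa
    · rw [← hφ0, map_mul]; exact mul_ne_zero hT hTa
    · linear_combination PQ n a * h - W * e0
  have hirrZ : Irreducible G := by
    unfold IsMisiurewicz GRat at hG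
    rw [Nat.add_sub_cancel] at hG
    split_ifs at hG with hnl
    · -- `n ∣ l`
      have hG1 : toRF (G * G0 ^ (d - 1)) = FRat d (l + 1) n := by
        have h0 : toRF G0 ≠ 0 := by
          unfold toRF
          simpa using hG0m.ne_zero
        have h1 : FRat d 1 n = toRF G0 ^ (d - 1) := by
          rw [FRat_one d n hd2, ← hG0]
        rw [h1, eq_div_iff (pow_ne_zero _ h0)] at hG
        rw [← hG]
        simp [toRF]
      obtain ⟨eH, hHm, hHr⟩ := hH _ hG1
      obtain ⟨j, hj⟩ := hnl
      obtain ⟨i, rfl⟩ : ∃ i, j = i + 1 := ⟨j - 1, by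
        rcases j with _ | j
        · omega
        · omega⟩
      obtain ⟨u, hu, hu1⟩ := crit_mul' hd2 hn i
      obtain ⟨v, hv, hv1⟩ := crit_mul' hd2 hn (i + 1)
      have hQn : Q n = a n ^ (d - 1) * QQ d v u := by
        rw [← QQ_scale, ← hu, ← hv, ← hj]
        simp only [hQ, ha]
        rw [show n * (i + 1 + 1) = l + n by rw [hj]; ring]
      obtain ⟨w, hw⟩ := QQ_dvd d hv1 hu1
      refine finish (d ^ l * (d - 1)) (PM n Q * PQ n a ^ (d - 1)) (PM n a ^ (d - 1) * PQ n Q)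
        (w * (PM n a ^ (d - 1) * PQ n Q)) ?_ ?_ ?_ ?_ ?_
      · refine (hG0m.pow (d - 1)).of_mul_monic_left ?_
        rw [mul_comm]; exact hHm
      · rw [← hHr, map_mul]; exact dvd_mul_right _ _
      · rw [map_mul, map_pow]; exact mul_ne_zero hSQ (pow_ne_zero _ hTa)
      · rw [map_mul, map_pow]; exact mul_ne_zero (pow_ne_zero _ hSa) hTQ
      · rw [one_pow, mul_one, sub_eq_iff_eq_add] at hw
        have hcancel : G * (PM n Q * PQ n a ^ (d - 1)) =
            QQ d v u * (PM n a ^ (d - 1) * PQ n Q) := by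
          apply mul_left_cancel₀ (hG0m.pow (d - 1)).ne_zero
          have e1 := congrArg (fun z => z ^ (d - 1)) e0
          simp only [mul_pow] at e1
          rw [hQn] at eH
          linear_combination PQ n a ^ (d - 1) * eH - QQ d v u * PQ n Q * e1
        rw [hcancel, hw]
        ring
    · obtain ⟨eH, hHm, hHr⟩ := hH _ hG
      obtain ⟨w, hw⟩ : a n ∣ Q n - d * a l ^ (d - 1) :=
        QQ_dvd d (crit_dvd_sub d n l) (by simp)
      refine finish (d ^ l * (d - 1)) (PM n Q) (a l ^ (d - 1) * PQ n Q) (w * PQ n Q) hHm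
        hHr.dvd hSQ ?_ ?_
      · rw [map_mul, map_pow]
        refine mul_ne_zero (pow_ne_zero _ ?_) hTQ
        rw [Ne, hφ0, hper]
        exact hnl
      · linear_combination eH + PQ n Q * hw
  have hGm : G.Monic := by
    unfold IsMisiurewicz GRat at hG
    rw [Nat.add_sub_cancel] at hG
    split_ifs at hG with hnl
    · have hG1 : toRF (G * G0 ^ (d - 1)) = FRat d (l + 1) n := by
        have h0 : toRF G0 ≠ 0 := by
          unfold toRF
          simpa using hG0m.ne_zero
        have h1 : FRat d 1 n = toRF G0 ^ (d - 1) := by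
          rw [FRat_one d n hd2, ← hG0]
        rw [h1, eq_div_iff (pow_ne_zero _ h0)] at hG
        rw [← hG]
        simp [toRF]
      refine (hG0m.pow (d - 1)).of_mul_monic_left ?_
      rw [mul_comm]; exact (hH _ hG1).2.1
    · exact (hH _ hG).2.1
  exact (hGm.irreducible_iff_irreducible_map_fraction_map (K := ℚ)).1 hirrZ
end
end

section
/- Let d be a rational prime, m ≥ 2, n ≥ 1, and let c_0 be a root of the Misiurewicz polynomial G_{d,m,n}(c). Set K = ℚ(c_0) with ring of integers O_K. Then d does not divide the index [O_K : ℤ[c_0]]. -/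
open Polynomial

noncomputable section

/-- The unicritical map. -/
def uni {R : Type*} [CommRing R] (d : ℕ) (c : R) (y : R) : R := y ^ d + c

theorem uni_dvd {R : Type*} [CommRing R] (d : ℕ) (c y z : R) (i : ℕ) :
    y - z ∣ (uni d c)^[i] y - (uni d c)^[i] z := by
  induction i with
  | zero => simp
  | succ i ih =>
    rw [Function.iterate_succ_apply', Function.iterate_succ_apply']
    refine ih.trans ?_
    simp only [uni, add_sub_add_right_eq_sub]
    exact sub_dvd_pow_sub_pow _ _ d

theorem uni_dvd_pow {R : Type*} [CommRing R] (d : ℕ) (c y z : R) (i : ℕ) (hi : 1 ≤ i) :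
    y ^ d - z ^ d ∣ (uni d c)^[i] y - (uni d c)^[i] z := by
  obtain ⟨j, rfl⟩ : ∃ j, i = j + 1 := ⟨i - 1, by omega⟩
  rw [Function.iterate_succ_apply, Function.iterate_succ_apply]
  have := uni_dvd d c (uni d c y) (uni d c z) j
  simpa only [uni, add_sub_add_right_eq_sub] using this

theorem geom_dvd {R : Type*} [CommRing R] (d : ℕ) (hd : 1 ≤ d) (p a b : R) (ha : p ∣ a)
    (hb : p ∣ b) : p ^ (d - 1) * (a - b) ∣ a ^ d - b ^ d := by
  obtain ⟨a, rfl⟩ := ha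
  obtain ⟨b, rfl⟩ := hb
  obtain ⟨e, rfl⟩ : ∃ j, d = j + 1 := ⟨d - 1, by omega⟩
  obtain ⟨s, hs⟩ := sub_dvd_pow_sub_pow a b (e + 1)
  refine ⟨s, ?_⟩
  rw [mul_pow, mul_pow, ← mul_sub, hs]
  simp only [Nat.add_sub_cancel]
  ring

/-- the `j`-th point of the orbit of zero under the `g`-th iterate -/
theorem orb_dvd {R : Type*} [CommRing R] (d : ℕ) (c : R) (g j : ℕ) :
    (uni d c)^[g] 0 ∣ (uni d c)^[g * j] 0 := by
  induction j with
  | zero => simp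
  | succ j ih =>
    rw [Nat.mul_succ, Nat.add_comm, Function.iterate_add_apply]
    have h := uni_dvd d c ((uni d c)^[g * j] 0) 0 g
    rw [sub_zero] at h
    have := ih.trans h
    exact (dvd_sub_left dvd_rfl).1 this

theorem delta_dvd {R : Type*} [CommRing R] (d : ℕ) (hd : 1 ≤ d) (c : R) (g j : ℕ) (hg : 1 ≤ g) :
    ((uni d c)^[g] 0) ^ (d - 1) * ((uni d c)^[g * (j + 1)] 0 - (uni d c)^[g * j] 0) ∣
      (uni d c)^[g * (j + 2)] 0 - (uni d c)^[g * (j + 1)] 0 := by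
  have h1 := uni_dvd_pow d c ((uni d c)^[g * (j + 1)] 0) ((uni d c)^[g * j] 0) g hg
  rw [← Function.iterate_add_apply, ← Function.iterate_add_apply] at h1
  have e1 : g + g * (j + 1) = g * (j + 2) := by ring
  have e2 : g + g * j = g * (j + 1) := by ring
  rw [e1, e2] at h1
  exact (geom_dvd d hd _ _ _ (orb_dvd d c g (j + 1)) (orb_dvd d c g j)).trans h1

theorem unit_or {R : Type*} [CommRing R] [IsDomain R] (d : ℕ) (hd : 2 ≤ d) (c : R)
    (g j N : ℕ) (hg : 1 ≤ g) (hN : 1 ≤ N)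
    (hper : (uni d c)^[g * (j + N)] 0 = (uni d c)^[g * j] 0) :
    IsUnit ((uni d c)^[g] 0) ∨ (uni d c)^[g * (j + 1)] 0 = (uni d c)^[g * j] 0 := by
  have key : ∀ N : ℕ, ((uni d c)^[g] 0) ^ N * ((uni d c)^[g * (j + 1)] 0 - (uni d c)^[g * j] 0) ∣
      (uni d c)^[g * (j + N + 1)] 0 - (uni d c)^[g * (j + N)] 0 := by
    intro N
    induction N with
    | zero => simp
    | succ N ih =>
      have h := delta_dvd d (by omega) c g (j + N) hg
      refine dvd_trans ?_ h
      rw [pow_succ', mul_assoc]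
      exact mul_dvd_mul (dvd_pow_self _ (by omega)) ih
  have h := key N
  have e : (uni d c)^[g * (j + N + 1)] 0 = (uni d c)^[g * (j + 1)] 0 := by
    have e1 : g * (j + N + 1) = g + g * (j + N) := by ring
    have e2 : g * (j + 1) = g + g * j := by ring
    rw [e1, e2, Function.iterate_add_apply, hper, ← Function.iterate_add_apply]
  rw [e, hper] at h
  obtain ⟨s, hs⟩ := h
  by_cases h0 : (uni d c)^[g * (j + 1)] 0 - (uni d c)^[g * j] 0 = 0
  · right; exact sub_eq_zero.1 h0
  · left
    have : ((uni d c)^[g] 0) ^ N * s = 1 := by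
      apply mul_left_cancel₀ h0
      linear_combination -hs
    have h2 : IsUnit (((uni d c)^[g] 0) ^ N) := IsUnit.of_mul_eq_one _ this
    exact (isUnit_pow_iff (by omega)).1 h2

theorem gcd_mem {R : Type*} [CommRing R] (d : ℕ) (c : R) (i j : ℕ) (I : Ideal R)
    (hi : (uni d c)^[i] 0 ∈ I) (hj : (uni d c)^[j] 0 ∈ I) :
    (uni d c)^[Nat.gcd i j] 0 ∈ I := by
  have hmap : ∀ k, Ideal.Quotient.mk I ((uni d c)^[k] 0) =
      (uni d (Ideal.Quotient.mk I c))^[k] 0 := by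
    intro k
    induction k with
    | zero => simp
    | succ k ih =>
      rw [Function.iterate_succ_apply', Function.iterate_succ_apply', ← ih]
      simp [uni]
  rw [← Ideal.Quotient.eq_zero_iff_mem, hmap] at *
  exact Function.IsPeriodicPt.gcd hi hj

theorem sub_dvd_deriv {R : Type*} [CommRing R] [IsDomain R] (d : ℕ) (u v : R) (hne : u ≠ v)
    (h : u ^ d = v ^ d) : u - v ∣ (d : R) * v ^ (d - 1) := by
  obtain ⟨k, hk⟩ := Polynomial.powAddExpansion v (u - v) d
  rw [add_sub_cancel, h] at hk
  refine ⟨-k, ?_⟩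
  apply mul_right_cancel₀ (sub_ne_zero.2 hne)
  linear_combination -hk

theorem dynamics {R : Type*} [CommRing R] [IsDomain R] (d : ℕ) (hd : 2 ≤ d) (c : R)
    (hpre : ∃ m n, 1 ≤ n ∧ (uni d c)^[m + n] 0 = (uni d c)^[m] 0) :
    ∃ n, 1 ≤ n ∧ ((uni d c)^[n] 0 = 0 ∨ ((uni d c)^[n] 0 ≠ 0 ∧ (uni d c)^[n] 0 ∣ (d : R) ∧
      ∃ m, (uni d c)^[m + n] 0 = (uni d c)^[m] 0)) := by
  classical
  obtain ⟨m, ⟨n0, hn0⟩, hmin⟩ := (⟨Nat.find hpre, Nat.find_spec hpre,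
    fun _ h => Nat.find_min hpre h⟩ : ∃ m, (∃ n, 1 ≤ n ∧ (uni d c)^[m + n] 0 = (uni d c)^[m] 0) ∧
      ∀ m', m' < m → ¬ ∃ n, 1 ≤ n ∧ (uni d c)^[m' + n] 0 = (uni d c)^[m'] 0)
  have hex : ∃ n, 1 ≤ n ∧ (uni d c)^[m + n] 0 = (uni d c)^[m] 0 := ⟨n0, hn0⟩
  obtain ⟨n, ⟨hn, hper⟩, hnmin⟩ := (⟨Nat.find hex, Nat.find_spec hex,
    fun _ h => Nat.find_min hex h⟩ : ∃ n, (1 ≤ n ∧ (uni d c)^[m + n] 0 = (uni d c)^[m] 0) ∧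
      ∀ n', n' < n → ¬ (1 ≤ n' ∧ (uni d c)^[m + n'] 0 = (uni d c)^[m] 0))
  clear hn0 n0 hpre hex
  refine ⟨n, hn, ?_⟩
  rcases Nat.eq_zero_or_pos m with rfl | hm
  · left; simpa using hper
  right
  have hpi : (uni d c)^[n] 0 ≠ 0 := by
    intro h
    exact hmin _ hm ⟨n, hn, by simpa using h⟩
  refine ⟨hpi, ?_, m, hper⟩
  obtain ⟨l, rfl⟩ : ∃ l, m = l + 1 := ⟨m - 1, by omega⟩
  have hne : (uni d c)^[l + n] 0 ≠ (uni d c)^[l] 0 := fun h => hmin _ (Nat.lt_succ_self l) ⟨n, hn, h⟩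
  have hpow : ((uni d c)^[l + n] 0) ^ d = ((uni d c)^[l] 0) ^ d := by
    have h := hper
    rw [Nat.add_right_comm, Function.iterate_succ_apply', Function.iterate_succ_apply'] at h
    exact add_right_cancel h
  have hl : l ≠ 0 := by
    rintro rfl
    simp only [zero_add, Function.iterate_zero, id] at hpow
    rw [zero_pow (by omega)] at hpow
    exact hpi (pow_eq_zero_iff (by omega) |>.1 hpow)
  have hdv := sub_dvd_deriv d _ _ hne hpow
  by_cases hnl : n ∣ l
  · obtain ⟨q, rfl⟩ := hnl
    obtain ⟨q, rfl⟩ : ∃ r, q = r + 1 := ⟨q - 1, by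
      rcases q with _ | q
      · simp at hl
      · simp⟩
    have hδ : ∀ j, ((uni d c)^[n] 0) ^ d ∣
        (uni d c)^[n * (j + 2)] 0 - (uni d c)^[n * (j + 1)] 0 := by
      intro j
      refine dvd_trans ?_ (delta_dvd d (by omega) c n j hn)
      induction j with
      | zero =>
        simp only [zero_add, mul_one, mul_zero, Function.iterate_zero, id, sub_zero]
        rw [← pow_succ, Nat.sub_add_cancel (by omega)]
      | succ j ih =>
        exact (ih.trans (delta_dvd d (by omega) c n j hn)).mul_left _
    have hv : ∀ j, ((uni d c)^[n] 0) ^ d ∣ (uni d c)^[n * (j + 1)] 0 - (uni d c)^[n] 0 := by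
      intro j
      induction j with
      | zero => simp
      | succ j ih =>
        have := dvd_add (hδ j) ih
        simpa using this
    obtain ⟨t, ht⟩ := hv q
    obtain ⟨r, hr⟩ := (hδ q)
    obtain ⟨w, hw⟩ := hdv
    have e : n * (q + 1) + n = n * (q + 2) := by ring
    rw [e, hr, eq_add_of_sub_eq ht] at hw
    obtain ⟨e, rfl⟩ : ∃ e, d = e + 2 := ⟨d - 2, by omega⟩
    generalize (uni (e + 2) c)^[n] 0 = π at *
    have h1 : ((e + 2 : ℕ) : R) * (1 + π * (π ^ e * t)) ^ (e + 1) = π * (r * w) := by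
      apply mul_left_cancel₀ (pow_ne_zero (e + 1) hpi)
      have h2 : π ^ (e + 2) * t + π = π * (1 + π * (π ^ e * t)) := by ring
      rw [h2, mul_pow] at hw
      simp only [show e + 2 - 1 = e + 1 from rfl] at hw
      linear_combination hw
    have hcop : IsCoprime π ((1 + π * (π ^ e * t)) ^ (e + 1)) := by
      apply IsCoprime.pow_right
      exact ⟨-(π ^ e * t), 1, by ring⟩
    exact hcop.dvd_of_dvd_mul_right ⟨_, h1⟩
  · have hg : 1 ≤ Nat.gcd l n := Nat.gcd_pos_of_pos_right _ hn
    have hgn : Nat.gcd l n < n := lt_of_le_of_ne (Nat.le_of_dvd hn (Nat.gcd_dvd_right _ _))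
      (fun h => hnl (h ▸ Nat.gcd_dvd_left l n))
    have hperk : ∀ k, (uni d c)^[k + (l + 1) + n] 0 = (uni d c)^[k + (l + 1)] 0 := by
      intro k
      rw [add_assoc, Function.iterate_add_apply, hper, ← Function.iterate_add_apply]
    have hperj : ∀ j k, (uni d c)^[k + (l + 1) + n * j] 0 = (uni d c)^[k + (l + 1)] 0 := by
      intro j k
      induction j with
      | zero => simp
      | succ j ih =>
        have := hperk (k + n * j)
        rw [← ih]
        convert this using 2 <;> ring_nf
    obtain ⟨N, hN⟩ := Nat.gcd_dvd_right l n
    obtain ⟨M, hM⟩ := Nat.gcd_dvd_left l n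
    set g := Nat.gcd l n with hgdef
    have hNpos : 1 ≤ N := by
      rcases N with _ | N
      · omega
      · omega
    have hunit : IsUnit ((uni d c)^[g] 0) := by
      have h1 : (uni d c)^[g * (M + 1 + N)] 0 = (uni d c)^[g * (M + 1)] 0 := by
        have := hperk (g - 1)
        have e1 : g * (M + 1 + N) = g - 1 + (l + 1) + n := by
          rw [mul_add, mul_add, ← hN, ← hM]; omega
        have e2 : g * (M + 1) = g - 1 + (l + 1) := by
          rw [mul_add, ← hM]; omega
        rw [e1, e2, this]
      rcases unit_or d hd c g (M + 1) N hg hNpos h1 with h | h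
      · exact h
      · exfalso
        have e1 : g * (M + 1 + 1) = g - 1 + (l + 1) + g := by
          rw [mul_add, mul_add, ← hM]; omega
        have e2 : g * (M + 1) = g - 1 + (l + 1) := by
          rw [mul_add, ← hM]; omega
        rw [e1, e2] at h
        -- shift to `l + 1`
        apply hnmin _ hgn
        refine ⟨hg, ?_⟩
        have hs := congrArg ((uni d c)^[n - (g - 1)]) h
        rw [← Function.iterate_add_apply, ← Function.iterate_add_apply] at hs
        have e3 : n - (g - 1) + (g - 1 + (l + 1) + g) = g + (l + 1) + n * 1 := by omega
        have e4 : n - (g - 1) + (g - 1 + (l + 1)) = 0 + (l + 1) + n * 1 := by omega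
        rw [e3, e4, hperj, hperj] at hs
        rw [add_comm, hs, zero_add]
    have hspan : (uni d c)^[g] 0 ∈ Ideal.span {(uni d c)^[l] 0, (uni d c)^[n] 0} :=
      gcd_mem d c l n _ (Ideal.subset_span (by simp)) (Ideal.subset_span (by simp))
    have htop := Ideal.eq_top_of_isUnit_mem _ hspan hunit
    have hcop : IsCoprime ((uni d c)^[l] 0) ((uni d c)^[n] 0) := by
      rw [Ideal.eq_top_iff_one, Ideal.mem_span_pair] at htop
      obtain ⟨a, b, hab⟩ := htop
      exact ⟨a, b, hab⟩
    have h1 : (uni d c)^[n] 0 ∣ (uni d c)^[l + n] 0 - (uni d c)^[l] 0 := by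
      have := uni_dvd d c ((uni d c)^[n] 0) 0 l
      rwa [sub_zero, ← Function.iterate_add_apply] at this
    exact (hcop.symm.pow_right (n := d - 1)).dvd_of_dvd_mul_right (h1.trans hdv)

theorem frob_dvd {R : Type*} [CommRing R] (d : ℕ) (hd : d.Prime) (c : R) (m n : ℕ) :
    (d : R) ∣ ((uni d c)^[n] 0) ^ (d ^ m) - ((uni d c)^[m + n] 0 - (uni d c)^[m] 0) := by
  have key : ∀ a b : R, (d : R) ∣ (a - b) ^ d - (a ^ d - b ^ d) := by
    intro a b
    obtain ⟨r, hr⟩ := exists_add_pow_prime_eq hd (a - b) b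
    rw [sub_add_cancel] at hr
    exact ⟨-((a - b) * b * r), by rw [hr]; ring⟩
  induction m with
  | zero => simp
  | succ m ih =>
    have h1 := key ((uni d c)^[m + n] 0) ((uni d c)^[m] 0)
    have h2 := ih.trans (sub_dvd_pow_sub_pow _ _ d)
    have h3 := dvd_add h1 h2
    rw [Nat.add_right_comm, Function.iterate_succ_apply', Function.iterate_succ_apply']
    simp only [uni]
    convert h3 using 1
    rw [pow_succ, pow_mul]
    ring

theorem aeval_critPoly {R : Type*} [CommRing R] (d : ℕ) (c : R) (n : ℕ) :
    aeval c (critPoly d n) = (uni d c)^[n] 0 := by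
  induction n with
  | zero => simp [critPoly]
  | succ n ih => rw [Function.iterate_succ_apply', ← ih]; simp [critPoly, uni]

theorem critPoly_squarefree (d : ℕ) [Fact d.Prime] (n : ℕ) (hn : 1 ≤ n) :
    Squarefree ((critPoly d n).map (Int.castRingHom (ZMod d))) := by
  apply Separable.squarefree
  obtain ⟨k, rfl⟩ : ∃ k, n = k + 1 := ⟨n - 1, by omega⟩
  rw [Polynomial.Separable]
  have : derivative ((critPoly d (k + 1)).map (Int.castRingHom (ZMod d))) = 1 := by
    simp [critPoly, derivative_pow]
  rw [this]
  exact isCoprime_one_right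

theorem reduced_quot {R : Type*} [CommRing R] (d : ℕ) [Fact d.Prime] (c : R) (n : ℕ) (hn : 1 ≤ n)
    (hgen : ∀ r : R, ∃ p : ℤ[X], aeval c p = r) (π : R) (h1 : π ∣ (d : R))
    (h2 : π ∣ (uni d c)^[n] 0) (γ : R) (N : ℕ) (hγ : π ∣ γ ^ N) : π ∣ γ := by
  obtain ⟨P, rfl⟩ := hgen γ
  let I : Ideal ℤ[X] := (Ideal.span {π}).comap (aeval c : ℤ[X] →ₐ[ℤ] R)
  have hI : ∀ p : ℤ[X], p ∈ I ↔ π ∣ aeval c p := fun p => by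
    simp [I, Ideal.mem_comap, Ideal.mem_span_singleton]
  let φ : ℤ[X] →+* (ZMod d)[X] := mapRingHom (Int.castRingHom (ZMod d))
  have hφ : Function.Surjective φ := by
    intro q
    obtain ⟨p, hp⟩ := Polynomial.map_surjective (Int.castRingHom (ZMod d))
      (ZMod.intCast_surjective) q
    exact ⟨p, hp⟩
  have hker : ∀ p : ℤ[X], φ p = 0 → p ∈ I := by
    intro p hp
    have : C (d : ℤ) ∣ p := by
      rw [C_dvd_iff_dvd_coeff]
      intro i
      have := congrArg (fun q => coeff q i) hp
      simp only [φ, coe_mapRingHom, coeff_map, coeff_zero] at this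
      exact (ZMod.intCast_zmod_eq_zero_iff_dvd _ _).1 this
    obtain ⟨q, rfl⟩ := this
    rw [hI]
    simp only [map_mul, aeval_C]
    exact Dvd.dvd.mul_right (by simpa using h1) _
  have hmem : ∀ p, φ p ∈ I.map φ → p ∈ I := by
    intro p hp
    rw [Ideal.mem_map_iff_of_surjective φ hφ] at hp
    obtain ⟨q, hq, he⟩ := hp
    have := hker (p - q) (by rw [map_sub, he, sub_self])
    simpa using I.add_mem this hq
  rw [← hI]
  apply hmem
  obtain ⟨g, hg⟩ := (IsPrincipalIdealRing.principal (I.map φ)).principal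
  rw [Ideal.submodule_span_eq] at hg
  have ha : g ∣ φ (critPoly d n) := by
    rw [← Ideal.mem_span_singleton, ← hg]
    exact Ideal.mem_map_of_mem _ ((hI _).2 (by rwa [aeval_critPoly]))
  have hsq : Squarefree g := (critPoly_squarefree d n hn).squarefree_of_dvd ha
  have hp : g ∣ (φ P) ^ N := by
    rw [← map_pow, ← Ideal.mem_span_singleton, ← hg]
    exact Ideal.mem_map_of_mem _ ((hI _).2 (by simpa using hγ))
  rw [hg, Ideal.mem_span_singleton]
  exact hsq.isRadical N _ hp

theorem local_max {B : Type*} [CommRing B] [IsDomain B] (R : Subalgebra ℤ B) (d : ℕ)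
    (π : R) (E : ℕ) (h2 : (d : R) ∣ π ^ E)
    (hred : ∀ (γ : R) (N : ℕ), π ∣ γ ^ N → π ∣ γ) (hpi : π ≠ 0)
    (α : B) (hint : ∀ b : B, IsIntegral ℤ b) (hα : (d : B) * α ∈ R) : α ∈ R := by
  have step : ∀ β : B, IsIntegral ℤ β → (π : B) * β ∈ R → β ∈ R := by
    intro β hβ hm
    obtain ⟨p, hp, hp0⟩ := hβ.tower_top (A := R)
    have := dvd_pow_natDegree_of_eval₂_eq_zero (f := algebraMap R B) Subtype.val_injective hp π
      ⟨_, hm⟩ β hp0 rfl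
    obtain ⟨s, hs⟩ := hred _ _ this
    have h3 : (π : B) * β = π * s := congrArg Subtype.val hs
    have h4 : (π : B) ≠ 0 := fun h => hpi (Subtype.ext h)
    rw [mul_left_cancel₀ h4 h3]
    exact s.2
  have hE : (π : B) ^ E * α ∈ R := by
    obtain ⟨t, ht⟩ := h2
    have h3 : (π : B) ^ E = d * t := by
      have := congrArg Subtype.val ht
      simpa using this
    rw [h3, mul_right_comm]
    exact R.mul_mem hα t.2
  have hpint : ∀ E : ℕ, (π : B) ^ E * α ∈ R → α ∈ R := by
    intro E
    induction E with
    | zero => intro h; simpa using h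
    | succ E ih =>
      intro h
      exact ih (step _ (hint _) (by rwa [← mul_assoc, ← pow_succ']))
  exact hpint E hE

/-- Rational functions that are units at `c`. -/
def UnitAt {K : Type*} [Field K] (c : K) (r : RF) : Prop :=
  ∃ p q : ℤ[X], aeval c p ≠ 0 ∧ aeval c q ≠ 0 ∧ r = toRF p / toRF q

theorem toRF_injective : Function.Injective toRF := IsFractionRing.injective ℤ[X] RF

theorem UnitAt.mul {K : Type*} [Field K] {c : K} {r s : RF} (hr : UnitAt c r) (hs : UnitAt c s) :
    UnitAt c (r * s) := by
  obtain ⟨p, q, hp, hq, rfl⟩ := hr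
  obtain ⟨p', q', hp', hq', rfl⟩ := hs
  refine ⟨p * p', q * q', by simp [hp, hp'], by simp [hq, hq'], ?_⟩
  simp only [toRF, map_mul]
  rw [div_mul_div_comm]

theorem UnitAt.inv {K : Type*} [Field K] {c : K} {r : RF} (hr : UnitAt c r) :
    UnitAt c r⁻¹ := by
  obtain ⟨p, q, hp, hq, rfl⟩ := hr
  exact ⟨q, p, hq, hp, inv_div _ _⟩

theorem UnitAt.one {K : Type*} [Field K] {c : K} : UnitAt c 1 :=
  ⟨1, 1, by simp, by simp, by simp [toRF]⟩

theorem UnitAt.div {K : Type*} [Field K] {c : K} {r s : RF} (hr : UnitAt c r) (hs : UnitAt c s) :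
    UnitAt c (r / s) := by
  rw [div_eq_mul_inv]; exact hr.mul hs.inv

theorem UnitAt.pow {K : Type*} [Field K] {c : K} {r : RF} (hr : UnitAt c r) (n : ℕ) :
    UnitAt c (r ^ n) := by
  induction n with
  | zero => rw [pow_zero]; exact UnitAt.one
  | succ n ih => rw [pow_succ]; exact ih.mul hr

theorem UnitAt.zpow {K : Type*} [Field K] {c : K} {r : RF} (hr : UnitAt c r) (n : ℤ) :
    UnitAt c (r ^ n) := by
  obtain ⟨n, rfl | rfl⟩ := n.eq_nat_or_neg
  · rw [zpow_natCast]; exact hr.pow n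
  · rw [zpow_neg, zpow_natCast]; exact (hr.pow n).inv

theorem UnitAt.FRat {K : Type*} [Field K] {c : K} (d m n : ℕ)
    (h : ∀ i k, 1 ≤ k → (uni d c)^[i + k] 0 ≠ (uni d c)^[i] 0) : UnitAt c (FRat d m n) := by
  have hA : ∀ i k, 1 ≤ k → UnitAt c (toRF (critPoly d (i + k)) - toRF (critPoly d i)) := by
    intro i k hk
    refine ⟨critPoly d (i + k) - critPoly d i, 1, ?_, by simp, by simp [toRF]⟩
    rw [map_sub, aeval_critPoly, aeval_critPoly]
    exact sub_ne_zero.2 (h i k hk)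
  unfold _root_.FRat
  refine Finset.prod_induction _ (UnitAt c) (fun _ _ => UnitAt.mul) UnitAt.one ?_
  intro k hk
  have hk : 1 ≤ k := Nat.pos_of_mem_divisors hk
  exact ((hA _ _ hk).div (hA _ _ hk)).zpow _

theorem preperiodic {K : Type*} [Field K] (c : K) (d m n : ℕ) (G : ℤ[X])
    (hG : IsMisiurewicz d m n G) (hroot : aeval c G = 0) :
    ∃ m n, 1 ≤ n ∧ (uni d c)^[m + n] 0 = (uni d c)^[m] 0 := by
  by_contra! hcon
  have hU : UnitAt c (toRF G) := by
    rw [hG, GRat]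
    split_ifs
    · exact (UnitAt.FRat d m n hcon).div (UnitAt.FRat d 1 n hcon)
    · exact UnitAt.FRat d m n hcon
  obtain ⟨p, q, hp, hq, he⟩ := hU
  have hq0 : toRF q ≠ 0 := by
    intro h0
    have : q = 0 := toRF_injective (by rw [h0]; simp [toRF])
    exact hq (by rw [this, map_zero])
  rw [eq_div_iff hq0] at he
  have h1 : G * q = p := toRF_injective (by rw [← he]; simp [toRF])
  apply hp
  rw [← h1, map_mul, hroot, zero_mul]

theorem map_orb {R S : Type*} [CommRing R] [CommRing S] (f : R →+* S) (d : ℕ) (c : R) (k : ℕ) :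
    f ((uni d c)^[k] 0) = (uni d (f c))^[k] 0 := by
  induction k with
  | zero => simp
  | succ k ih =>
    rw [Function.iterate_succ_apply', Function.iterate_succ_apply', ← ih]
    simp [uni]

theorem torsion_adjoin {K : Type*} [Field K] [NumberField K] (c₀ : NumberField.RingOfIntegers K)
    (hgen : Algebra.adjoin ℚ {(c₀ : K)} = ⊤) (α : NumberField.RingOfIntegers K) :
    ∃ k : ℤ, k ≠ 0 ∧ k • α ∈ Algebra.adjoin ℤ {c₀} := by
  have key : ∀ x : K, x ∈ Algebra.adjoin ℚ {(c₀ : K)} →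
      ∃ k : ℤ, k ≠ 0 ∧ ∃ r ∈ Algebra.adjoin ℤ {c₀}, (k : K) * x = (r : K) := by
    intro x hx
    induction hx using Algebra.adjoin_induction with
    | mem x hx =>
      rw [Set.mem_singleton_iff] at hx
      exact ⟨1, one_ne_zero, c₀, Algebra.self_mem_adjoin_singleton ℤ c₀, by simp [hx]⟩
    | algebraMap q =>
      refine ⟨q.den, by simp, algebraMap ℤ _ q.num, Subalgebra.algebraMap_mem _ _, ?_⟩
      have h := Rat.den_mul_eq_num q
      have h2 := congrArg (algebraMap ℚ K) h
      rw [map_mul, map_natCast, map_intCast] at h2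
      simpa using h2
    | add x y _ _ hx hy =>
      obtain ⟨k, hk, r, hr, h⟩ := hx
      obtain ⟨k', hk', r', hr', h'⟩ := hy
      refine ⟨k * k', mul_ne_zero hk hk', k' • r + k • r', Subalgebra.add_mem _
        (Subalgebra.zsmul_mem _ hr _) (Subalgebra.zsmul_mem _ hr' _), ?_⟩
      simp only [zsmul_eq_mul, map_add, map_mul, map_intCast, Int.cast_mul]
      linear_combination (k' : K) * h + (k : K) * h'
    | mul x y _ _ hx hy =>
      obtain ⟨k, hk, r, hr, h⟩ := hx
      obtain ⟨k', hk', r', hr', h'⟩ := hy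
      refine ⟨k * k', mul_ne_zero hk hk', r * r', Subalgebra.mul_mem _ hr hr', ?_⟩
      simp only [map_mul, Int.cast_mul]
      linear_combination (k' : K) * y * h + algebraMap (NumberField.RingOfIntegers K) K r * h'
  obtain ⟨k, hk, r, hr, h⟩ := key α (by rw [hgen]; trivial)
  refine ⟨k, hk, ?_⟩
  have : k • α = r := by
    apply NumberField.RingOfIntegers.ext
    rw [← h]; simp
  rwa [this]

theorem not_dvd_of_max {B : Type*} [CommRing B] [Module.Finite ℤ B] (R : Subalgebra ℤ B) (d : ℕ)
    (hd : d.Prime) (htor : ∀ α : B, ∃ k : ℤ, k ≠ 0 ∧ k • α ∈ R)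
    (hmax : ∀ α : B, (d : B) * α ∈ R → α ∈ R) :
    ¬ d ∣ R.toSubring.toAddSubgroup.index := by
  intro hdvd
  have : Fact d.Prime := ⟨hd⟩
  let Q := B ⧸ R.toSubring.toAddSubgroup
  have : AddGroup.FG B := Module.Finite.iff_addGroup_fg.1 inferInstance
  have : AddGroup.FG Q := inferInstance
  have : Module.Finite ℤ Q := Module.Finite.iff_addGroup_fg.2 inferInstance
  have : Finite Q := by
    apply Module.finite_of_fg_torsion
    intro x
    obtain ⟨a, rfl⟩ := QuotientAddGroup.mk_surjective x
    obtain ⟨k, hk, hm⟩ := htor a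
    refine ⟨⟨k, mem_nonZeroDivisors_of_ne_zero hk⟩, ?_⟩
    change k • (a : Q) = 0
    rw [← QuotientAddGroup.mk_zsmul]
    exact (QuotientAddGroup.eq_zero_iff _).2 hm
  obtain ⟨x, hx⟩ := exists_prime_addOrderOf_dvd_card' (G := Q) d hdvd
  obtain ⟨a, rfl⟩ := QuotientAddGroup.mk_surjective x
  have h1 : d • (a : Q) = 0 := by rw [← hx]; exact addOrderOf_nsmul_eq_zero _
  rw [← QuotientAddGroup.mk_nsmul, QuotientAddGroup.eq_zero_iff, nsmul_eq_mul] at h1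
  have h2 : (a : Q) = 0 := (QuotientAddGroup.eq_zero_iff _).2 (hmax a h1)
  rw [h2, addOrderOf_zero] at hx
  exact hd.one_lt.ne hx

/-- Let `d` be a prime, `m ≥ 2`, `n ≥ 1`, and `c₀` a root of `G_{d,m,n}`,
with `K = ℚ(c₀)`. Then `d` does not divide the index `[O_K : ℤ[c₀]]`. -/
theorem prime_not_dvd_index (d m n : ℕ) (hd : d.Prime) (hm : 2 ≤ m) (hn : 1 ≤ n)
    (G : Polynomial ℤ) (hG : IsMisiurewicz d m n G)
    (K : Type*) [Field K] [NumberField K] (c₀ : NumberField.RingOfIntegers K)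
    (hroot : Polynomial.aeval (c₀ : K) G = 0)
    (hgen : Algebra.adjoin ℚ {(c₀ : K)} = ⊤) :
    ¬ d ∣ (Algebra.adjoin ℤ {c₀}).toSubring.toAddSubgroup.index := by
  have : Fact d.Prime := ⟨hd⟩
  refine not_dvd_of_max _ d hd (torsion_adjoin c₀ hgen) ?_
  intro α hα
  obtain ⟨m', n', hn', hper⟩ := preperiodic (c₀ : K) d m n G hG hroot
  let c : Algebra.adjoin ℤ {c₀} := ⟨c₀, Algebra.self_mem_adjoin_singleton ℤ c₀⟩
  let ι : Algebra.adjoin ℤ {c₀} →+* K :=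
    (algebraMap (NumberField.RingOfIntegers K) K).comp (algebraMap (Algebra.adjoin ℤ {c₀}) _)
  have hι : Function.Injective ι :=
    (NumberField.RingOfIntegers.coe_injective).comp Subtype.val_injective
  have hper' : (uni d c)^[m' + n'] 0 = (uni d c)^[m'] 0 := by
    apply hι
    rw [map_orb, map_orb]
    exact hper
  have hsurj : ∀ r : Algebra.adjoin ℤ {c₀}, ∃ p : ℤ[X], aeval c p = r := by
    rintro ⟨r, hr⟩
    have hr' := hr
    rw [Algebra.adjoin_singleton_eq_range_aeval] at hr'
    obtain ⟨p, hp⟩ := hr'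
    refine ⟨p, Subtype.ext ?_⟩
    exact (Polynomial.aeval_algebraMap_apply (NumberField.RingOfIntegers K) c p).symm.trans hp
  have hint : ∀ b : NumberField.RingOfIntegers K, IsIntegral ℤ b :=
    fun b => Algebra.IsIntegral.isIntegral b
  obtain ⟨N, hN, h | ⟨h0, hdvd, M, hM⟩⟩ := dynamics d hd.two_le c ⟨m', n', hn', hper'⟩
  · refine local_max _ d (d : Algebra.adjoin ℤ {c₀}) 1 (by simp)
      (fun γ k hk => reduced_quot d c N hN hsurj _ dvd_rfl (by rw [h]; exact dvd_zero _) γ k hk)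
      ?_ α hint hα
    exact_mod_cast hd.ne_zero
  · refine local_max _ d ((uni d c)^[N] 0) (d ^ M) ?_
      (fun γ k hk => reduced_quot d c N hN hsurj _ hdvd dvd_rfl γ k hk) h0 α hint hα
    have := frob_dvd d hd c M N
    rwa [hM, sub_self, sub_zero] at this
end
end

section
/- Let d be a rational prime and let c ∈ ℚ̄ be such that f_{c,d}(x) = x^d + c has exact type (m, n) with m ≠ 0. Set K = ℚ(c) and a_i = f_{c,d}^i(0) ∈ O_K for 1 ≤ i ≤ m+n−1. If n divides i, then the principal ideal (a_i) of O_K satisfies (a_i)^{M_{m,n}} = (d), where M_{m,n} = d^{m−1}(d−1) if n ∤ m−1 and M_{m,n} = (d^{m−1}−1)(d−1) if n | m−1. -/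
open Polynomial

noncomputable section

/-- `f_{c,d}(x) = x^d + c` has exact type `(m, n)`: `n` is the minimal positive integer with
`f_{c,d}^{m+n}(0) = f_{c,d}^m(0)`, and `f_{c,d}^{k+n}(0) ≠ f_{c,d}^k(0)` for every `k < m`. -/
def HasExactType {K : Type*} [CommRing K] (d : ℕ) (c : K) (m n : ℕ) : Prop :=
  0 < n ∧
  (fun x => x ^ d + c)^[m + n] 0 = (fun x => x ^ d + c)^[m] 0 ∧
  (∀ j, 0 < j → j < n → (fun x => x ^ d + c)^[m + j] 0 ≠ (fun x => x ^ d + c)^[m] 0) ∧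
  (∀ k, k < m → (fun x => x ^ d + c)^[k + n] 0 ≠ (fun x => x ^ d + c)^[k] 0)

set_option linter.unusedSectionVars false

section LocalPart

variable {R : Type*} [CommRing R] [IsDomain R] (v : AddValuation R ℕ∞)

lemma val_le_of_dvd {x y : R} (h : x ∣ y) : v x ≤ v y := by
  obtain ⟨z, rfl⟩ := h
  rw [v.map_mul]
  exact le_self_add

lemma val_prod_const {ι : Type*} (s : Finset ι) (f : ι → R) (t : ℕ∞)
    (h : ∀ i ∈ s, v (f i) = t) : v (∏ i ∈ s, f i) = s.card • t := by
  classical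
  induction s using Finset.induction_on with
  | empty => simp
  | insert a s ha ih =>
    rw [Finset.prod_insert ha, v.map_mul, Finset.card_insert_of_notMem ha, succ_nsmul',
      h a (Finset.mem_insert_self _ _), ih (fun i hi => h i (Finset.mem_insert_of_mem hi))]

lemma val_prod_ge {ι : Type*} (s : Finset ι) (f : ι → R) (t : ℕ∞)
    (h : ∀ i ∈ s, t ≤ v (f i)) : s.card • t ≤ v (∏ i ∈ s, f i) := by
  classical
  induction s using Finset.induction_on with
  | empty => simp
  | insert a s ha ih =>
    rw [Finset.prod_insert ha, v.map_mul, Finset.card_insert_of_notMem ha, succ_nsmul']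
    exact add_le_add (h a (Finset.mem_insert_self _ _))
      (ih (fun i hi => h i (Finset.mem_insert_of_mem hi)))

lemma val_root {d : ℕ} (hd : d.Prime) {ζ ξ : R} (hζ : IsPrimitiveRoot ζ d)
    (h1 : ξ ^ d = 1) (h2 : ξ ≠ 1) : v (1 - ξ) = v (1 - ζ) := by
  have : NeZero d := ⟨hd.ne_zero⟩
  have : Fact d.Prime := ⟨hd⟩
  have hξ : IsPrimitiveRoot ξ d := IsPrimitiveRoot.iff_orderOf.2 (orderOf_eq_prime h1 h2)
  obtain ⟨i, -, rfl⟩ := hζ.eq_pow_of_pow_eq_one h1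
  obtain ⟨j, -, hj⟩ := hξ.eq_pow_of_pow_eq_one hζ.pow_eq_one
  apply le_antisymm
  · apply val_le_of_dvd
    have := sub_dvd_pow_sub_pow 1 (ζ ^ i) j
    rwa [hj, one_pow] at this
  · apply val_le_of_dvd
    have := sub_dvd_pow_sub_pow 1 ζ i
    rwa [one_pow] at this

lemma val_d {d : ℕ} (hd : d.Prime) {ζ : R} (hζ : IsPrimitiveRoot ζ d) :
    v (d : R) = (d - 1) • v (1 - ζ) := by
  obtain ⟨e, rfl⟩ : ∃ e, d = e + 1 := ⟨d - 1, by have := hd.pos; omega⟩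
  have := hζ.prod_one_sub_pow_eq_order
  push_cast
  rw [← this, val_prod_const v (Finset.range e) _ (v (1 - ζ))]
  · simp
  · intro k hk
    apply val_root v hd hζ
    · rw [← pow_mul, mul_comm, pow_mul, hζ.pow_eq_one, one_pow]
    · exact hζ.pow_ne_one_of_pos_of_lt (by omega) (by have := Finset.mem_range.1 hk; omega)

lemma exists_factor {d : ℕ} (hd : d.Prime) {ζ : R} (hζ : IsPrimitiveRoot ζ d) (x y : R) :
    ∃ s : Finset R, s.card = d - 1 ∧ x ^ d - y ^ d = (x - y) * ∏ ξ ∈ s, (x - ξ * y) ∧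
      ∀ ξ ∈ s, x - ξ * y = (x - y) + (1 - ξ) * y ∧ v ((1 - ξ) * y) = v (1 - ζ) + v y := by
  classical
  have h1 : (1 : R) ∈ nthRootsFinset d (1 : R) := by
    rw [mem_nthRootsFinset hd.pos]; simp
  refine ⟨(nthRootsFinset d (1 : R)).erase 1, ?_, ?_, ?_⟩
  · rw [Finset.card_erase_of_mem h1, hζ.card_nthRootsFinset]
  · rw [hζ.pow_sub_pow_eq_prod_sub_mul x y hd.pos, ← Finset.mul_prod_erase _ _ h1, one_mul]
  · intro ξ hξ
    rw [Finset.mem_erase, mem_nthRootsFinset hd.pos] at hξ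
    refine ⟨by ring, ?_⟩
    rw [v.map_mul, val_root v hd hζ hξ.2 hξ.1]

lemma nsmul_split {d : ℕ} (hd : d.Prime) (t : ℕ∞) : d • t = t + (d - 1) • t := by
  obtain ⟨e, rfl⟩ : ∃ e, d = e + 1 := ⟨d - 1, by have := hd.pos; omega⟩
  rw [succ_nsmul']; simp

lemma val_a {d : ℕ} (hd : d.Prime) {ζ : R} (hζ : IsPrimitiveRoot ζ d) {x y : R}
    (h : v (x - y) < v (1 - ζ) + v y) : v (x ^ d - y ^ d) = d • v (x - y) := by
  obtain ⟨s, hs, he, hf⟩ := exists_factor v hd hζ x y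
  rw [he, v.map_mul, val_prod_const v s _ (v (x - y)), hs, nsmul_split hd]
  intro ξ hξ
  obtain ⟨h1, h2⟩ := hf ξ hξ
  rw [h1]
  exact v.map_add_eq_of_lt_left (by rwa [h2])

lemma val_b {d : ℕ} (hd : d.Prime) {ζ : R} (hζ : IsPrimitiveRoot ζ d) {x y : R} {t : ℕ∞}
    (h : t ≤ v (1 - ζ) + v y) (h' : t ≤ v (x - y)) : d • t ≤ v (x ^ d - y ^ d) := by
  obtain ⟨s, hs, he, hf⟩ := exists_factor v hd hζ x y
  rw [he, v.map_mul, nsmul_split hd, ← hs]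
  refine add_le_add h' (val_prod_ge v s _ t ?_)
  intro ξ hξ
  obtain ⟨h1, h2⟩ := hf ξ hξ
  rw [h1]
  exact v.map_le_add h' (by rwa [h2])

lemma val_c {d : ℕ} {x y : R} : v (x - y) ≤ v (x ^ d - y ^ d) :=
  val_le_of_dvd v (sub_dvd_pow_sub_pow x y d)

lemma val_strict {d : ℕ} (hd : d.Prime) {ζ : R} (hζ : IsPrimitiveRoot ζ d) {x y : R}
    (hE : 0 < v (1 - ζ)) (h : 0 < v (x - y)) (hne : v (x - y) ≠ ⊤) :
    v (x - y) < v (x ^ d - y ^ d) := by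
  obtain ⟨s, hs, he, hf⟩ := exists_factor v hd hζ x y
  have h1 : s.card • (1 : ℕ∞) ≤ v (∏ ξ ∈ s, (x - ξ * y)) := by
    apply val_prod_ge
    intro ξ hξ
    obtain ⟨h1, h2⟩ := hf ξ hξ
    rw [h1]
    refine v.map_le_add (Order.one_le_iff_pos.2 h) ?_
    rw [h2]
    exact (Order.one_le_iff_pos.2 hE).trans le_self_add
  have h2 : (1 : ℕ∞) ≤ s.card • (1 : ℕ∞) := by
    rw [hs, nsmul_eq_mul, mul_one]
    have := hd.two_le
    exact_mod_cast (by omega : 1 ≤ d - 1)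
  rw [he, v.map_mul]
  exact (ENat.add_one_le_iff hne).1 (by gcongr; exact h2.trans h1)

lemma val_e {d : ℕ} (hd : d.Prime) {ζ : R} (hζ : IsPrimitiveRoot ζ d) {x y : R}
    (hE : 0 < v (1 - ζ)) (h : 0 < v (x ^ d - y ^ d)) : 0 < v (x - y) := by
  by_contra h0
  have h0 : v (x - y) = 0 := by simpa using h0
  rw [val_a v hd hζ (by rw [h0]; exact hE.trans_le le_self_add), h0] at h
  simp at h

end LocalPart

section Orbit

variable {R : Type*} [CommRing R] [IsDomain R] (v : AddValuation R ℕ∞)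
  {d : ℕ} {c : R} {a : ℕ → R}

lemma diff_succ (ha : ∀ k, a (k + 1) = a k ^ d + c) (s k : ℕ) :
    a (k + 1 + s) - a (k + 1) = a (k + s) ^ d - a k ^ d := by
  rw [ha k, add_right_comm, ha]; ring

lemma diff_mono (ha : ∀ k, a (k + 1) = a k ^ d + c) (s : ℕ) :
    Monotone (fun k => v (a (k + s) - a k)) := by
  apply monotone_nat_of_le_succ
  intro k
  simp only [diff_succ ha]
  exact val_c v

lemma diff_one (hd : d ≠ 0) (h0 : a 0 = 0) (ha : ∀ k, a (k + 1) = a k ^ d + c) (s : ℕ) :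
    v (a (1 + s) - a 1) = d • v (a s) := by
  have := diff_succ ha s 0
  simp only [zero_add] at this
  rw [this, h0, zero_pow hd, sub_zero, v.map_pow]

lemma diff_ge (hd : d ≠ 0) (h0 : a 0 = 0) (ha : ∀ k, a (k + 1) = a k ^ d + c) (s k : ℕ)
    (hk : 1 ≤ k) : d • v (a s) ≤ v (a (k + s) - a k) := by
  rw [← diff_one v hd h0 ha]
  exact diff_mono v ha s hk

lemma two_mul_le_nsmul (hd : d.Prime) (t : ℕ∞) : 2 * t ≤ d • t := by
  rw [nsmul_eq_mul]
  gcongr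
  exact_mod_cast hd.two_le

lemma val_mul_index (hd : d.Prime) (h0 : a 0 = 0) (ha : ∀ k, a (k + 1) = a k ^ d + c)
    (s : ℕ) (hs : 1 ≤ s) (hpos : 0 < v (a s)) (hfin : v (a s) ≠ ⊤) (k : ℕ) :
    v (a ((k + 1) * s)) = v (a s) := by
  induction k with
  | zero => simp
  | succ k ih =>
    have h1 := diff_ge v hd.ne_zero h0 ha ((k + 1) * s) s hs
    rw [ih] at h1
    have h2 : v (a s) < v (a (s + (k + 1) * s) - a s) := by
      refine lt_of_lt_of_le ?_ ((two_mul_le_nsmul hd _).trans h1)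
      lift v (a s) to ℕ using hfin with t
      norm_cast at hpos ⊢
      omega
    have h3 := v.map_add_eq_of_lt_left h2
    rw [add_sub_cancel] at h3
    rw [← h3]; congr 2; ring

lemma val_eq_of_pos (hd : d.Prime) (h0 : a 0 = 0) (ha : ∀ k, a (k + 1) = a k ^ d + c)
    (s t : ℕ) (hs : 1 ≤ s) (ht : 1 ≤ t) (hps : 0 < v (a s)) (hpt : 0 < v (a t))
    (hfs : v (a s) ≠ ⊤) (hft : v (a t) ≠ ⊤) : v (a s) = v (a t) := by
  obtain ⟨s, rfl⟩ : ∃ e, s = e + 1 := ⟨s - 1, by omega⟩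
  obtain ⟨t, rfl⟩ : ∃ e, t = e + 1 := ⟨t - 1, by omega⟩
  rw [← val_mul_index v hd h0 ha _ hs hps hfs t, ← val_mul_index v hd h0 ha _ ht hpt hft s,
    mul_comm]

lemma a_periodic (ha : ∀ k, a (k + 1) = a k ^ d + c) {m n : ℕ} (h : a (m + n) = a m)
    (k : ℕ) (hk : m ≤ k) (q : ℕ) : a (k + n * q) = a k := by
  have h1 : ∀ k, m ≤ k → a (k + n) = a k := by
    intro k hk
    induction k, hk using Nat.le_induction with
    | base => exact h
    | succ k hk ih => rw [add_right_comm, ha, ha, ih]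
  induction q with
  | zero => simp
  | succ q ih => rw [mul_add, mul_one, ← add_assoc, h1 _ (by omega), ih]

lemma a_ne_zero (h0 : a 0 = 0) (ha : ∀ k, a (k + 1) = a k ^ d + c) {m n : ℕ} (hm : 0 < m)
    (hper : a (m + n) = a m) (hmin : ∀ k < m, a (k + n) ≠ a k) (s : ℕ) (hs : 1 ≤ s) :
    a s ≠ 0 := by
  intro hz
  have hp : a (0 + s) = a 0 := by rw [zero_add, hz, h0]
  have h1 := a_periodic ha hp
  apply hmin 0 hm
  have h2 := h1 (0 + n) (by omega) m
  have h3 := h1 0 le_rfl m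
  have h4 := a_periodic ha hper (0 + s * m) (by nlinarith) 1
  rw [← h2, ← h3, ← h4]; congr 1; ring

theorem local_main (hv : ∀ x, v x = ⊤ → x = 0) (hd : d.Prime) (h0 : a 0 = 0)
    (ha : ∀ k, a (k + 1) = a k ^ d + c) {m n : ℕ} (hm : 2 ≤ m) (hn : 0 < n)
    (hper : a (m + n) = a m)
    (hminn : ∀ j, 0 < j → j < n → a (m + j) ≠ a m)
    (hmin : ∀ k < m, a (k + n) ≠ a k)
    {ζ : R} (hζ : IsPrimitiveRoot ζ d) (hζa : a (m - 1 + n) = ζ * a (m - 1))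
    (i : ℕ) (hi : 1 ≤ i) (hni : n ∣ i) :
    v (a i ^ (if n ∣ m - 1 then (d ^ (m - 1) - 1) * (d - 1) else d ^ (m - 1) * (d - 1))) =
      v (d : R) := by
  have hne := a_ne_zero h0 ha (by omega) hper hmin
  have hfin : ∀ s, 1 ≤ s → v (a s) ≠ ⊤ := fun s hs h => hne s hs (hv _ h)
  have hEfin : v (1 - ζ) ≠ ⊤ := fun h =>
    hζ.ne_one hd.one_lt (sub_eq_zero.1 (hv _ h)).symm
  have hlast : ∀ i, 1 ≤ i → n ∣ i →
      v (a (m - 1 + i) - a (m - 1)) = v (1 - ζ) + v (a (m - 1)) := by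
    rintro i hi ⟨q, rfl⟩
    obtain ⟨q, rfl⟩ : ∃ e, q = e + 1 := ⟨q - 1, by
      rcases q with _ | q
      · simp at hi
      · simp⟩
    have : a (m - 1 + n * (q + 1)) = a (m - 1 + n) := by
      rw [mul_add, mul_one, add_comm (n * q), ← add_assoc]
      exact a_periodic ha hper _ (by omega) q
    rw [this, hζa, v.map_sub_swap, ← v.map_mul]
    congr 1; ring
  rw [v.map_pow, val_d v hd hζ]
  rcases eq_or_ne (v (1 - ζ)) 0 with hE | hE
  · -- away from d
    have : v (a i) = 0 := by
      by_contra hpi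
      have hpi : 0 < v (a i) := pos_iff_ne_zero.2 hpi
      have h1 := diff_ge v hd.ne_zero h0 ha i (m - 1) (by omega)
      rw [hlast i hi hni, hE, zero_add] at h1
      have h2 := (two_mul_le_nsmul hd (v (a i))).trans h1
      have h3 : 0 < v (a (m - 1)) := lt_of_lt_of_le (by positivity) h2
      rw [← val_eq_of_pos v hd h0 ha i (m - 1) hi (by omega) hpi h3 (hfin _ hi)
        (hfin _ (by omega))] at h2
      have := hfin i hi
      lift v (a i) to ℕ using this with t
      norm_cast at h2 hpi
      omega
    rw [this, hE]; simp
  have hE : 0 < v (1 - ζ) := pos_iff_ne_zero.2 hE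
  have hpos : ∀ i, 1 ≤ i → n ∣ i → 0 < v (a i) := by
    rintro i hi ⟨q, rfl⟩
    have h1 : ∀ k ≤ m, 0 < v (a (m - k + n * q) - a (m - k)) := by
      intro k hk
      induction k with
      | zero =>
        rw [Nat.sub_zero, a_periodic ha hper m le_rfl q, sub_self, v.map_zero]
        exact ENat.top_pos
      | succ k ih =>
        have := ih (by omega)
        rw [show m - k = m - (k + 1) + 1 by omega, diff_succ ha] at this
        exact val_e v hd hζ hE this
    have := h1 m le_rfl
    simpa [h0] using this
  have hdiv : ∀ s, 1 ≤ s → 0 < v (a s) → n ∣ s := by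
    intro s hs hp
    have hall : ∀ k, 0 < v (a (k + s) - a k) := by
      intro k
      refine lt_of_lt_of_le ?_ (diff_mono v ha s (Nat.zero_le k))
      simpa [h0] using hp
    have htop : v (a (m + s) - a m) = ⊤ := by
      by_contra hnt
      have h1 := val_strict v hd hζ hE (hall m) hnt
      rw [← diff_succ ha] at h1
      have h2 := diff_mono v ha s (show m + 1 ≤ m + n by omega)
      have h3 : a (m + n + s) = a (m + s) := by
        have := a_periodic ha hper (m + s) (by omega) 1
        rw [← this]; congr 1; ring
      simp only [h3, hper] at h2
      exact absurd h1 (not_lt.2 h2)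
    have heq : a (m + s) = a m := sub_eq_zero.1 (hv _ htop)
    by_contra hnd
    apply hminn (s % n) (Nat.pos_of_ne_zero fun h => hnd (Nat.dvd_of_mod_eq_zero h))
      (Nat.mod_lt _ hn)
    rw [← heq, ← a_periodic ha hper (m + s % n) (by omega) (s / n)]
    congr 1
    rw [add_assoc, Nat.mod_add_div]
  have hρ := hpos i hi hni
  have hle : ∀ k, 1 ≤ k → v (a k) ≤ v (a i) := by
    intro k hk
    rcases eq_or_ne (v (a k)) 0 with h | h
    · rw [h]; exact zero_le
    · exact (val_eq_of_pos v hd h0 ha k i hk hi (pos_iff_ne_zero.2 h) hρ (hfin _ hk)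
        (hfin _ hi)).le
  have hL := hlast i hi hni
  have hLle : v (1 - ζ) + v (a (m - 1)) ≤ v (1 - ζ) + v (a i) := by
    gcongr; exact hle _ (by omega)
  have hLfin : v (1 - ζ) + v (a i) < ⊤ := by
    simp [lt_top_iff_ne_top, hEfin, hfin i hi]
  have hall : ∀ k, 0 < v (a (k + i) - a k) := by
    intro k
    refine lt_of_lt_of_le ?_ (diff_mono v ha i (Nat.zero_le k))
    simpa [h0] using hρ
  have hclaim : ∀ k ≤ m - 1, v (a (k + i) - a k) = (d ^ k) • v (a i) := by
    intro k hk
    induction k with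
    | zero => simp [h0]
    | succ k ih =>
      rw [diff_succ ha, val_a v hd hζ, ih (by omega), pow_succ', mul_nsmul']
      rcases Nat.eq_zero_or_pos k with rfl | hk0
      · simp only [zero_add, h0, sub_zero, v.map_zero]
        rw [add_top]
        exact lt_top_iff_ne_top.2 (hfin i hi)
      by_contra hcon
      have hcon := not_lt.1 hcon
      have h1 := val_b v hd hζ (le_self_add : v (1 - ζ) ≤ v (1 - ζ) + v (a k))
        (le_self_add.trans hcon)
      rw [← diff_succ ha] at h1
      have h2 := diff_mono v ha i hk
      simp only at h2
      rw [hL] at h2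
      have h3 := ((two_mul_le_nsmul hd _).trans h1).trans (h2.trans hLle)
      -- E > ρ
      have g1 : v (a (1 + i) - a 1) ≠ ⊤ := by
        have := diff_mono v ha i (show 1 ≤ m - 1 by omega)
        simp only at this
        rw [hL] at this
        exact ((this.trans hLle).trans_lt hLfin).ne
      have g2 := val_strict v hd hζ hE (hall 1) g1
      rw [← diff_succ ha, diff_one v hd.ne_zero h0 ha] at g2
      have g3 := diff_mono v ha i (show 1 + 1 ≤ m - 1 by omega)
      simp only at g3
      rw [hL] at g3
      have g4 := ((two_mul_le_nsmul hd _).trans_lt g2).trans_le (g3.trans hLle)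
      have := hfin i hi
      lift v (a i) to ℕ using this with t
      lift v (1 - ζ) to ℕ using hEfin with e
      norm_cast at h3 g4
      omega
  have hfinal := hclaim (m - 1) le_rfl
  rw [hL] at hfinal
  have hlam : v (a (m - 1)) = if n ∣ m - 1 then v (a i) else 0 := by
    split_ifs with h
    · exact val_eq_of_pos v hd h0 ha _ i (by omega) hi (hpos _ (by omega) h) hρ
        (hfin _ (by omega)) (hfin _ hi)
    · by_contra h'
      exact h (hdiv _ (by omega) (pos_iff_ne_zero.2 h'))
  rw [hlam] at hfinal
  have := hfin i hi
  clear hlam hL hLle hLfin hall hclaim hle hρ hpos hdiv hlast hE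
  lift v (a i) to ℕ using this with t
  lift v (1 - ζ) to ℕ using hEfin with e
  split_ifs at hfinal ⊢ with h
  · simp only [nsmul_eq_mul] at hfinal ⊢
    norm_cast at hfinal ⊢
    have h1 : 1 ≤ d ^ (m - 1) := Nat.one_le_pow _ _ hd.pos
    have : e = (d ^ (m - 1) - 1) * t := by
      rw [Nat.sub_mul, one_mul]; omega
    rw [this]; ring
  · simp only [nsmul_eq_mul, add_zero] at hfinal ⊢
    norm_cast at hfinal ⊢
    rw [hfinal]; ring

end Orbit

theorem orbit_ideal_pow_eq_span_prime (d m n : ℕ) (hd : d.Prime)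
    (K : Type*) [Field K] [NumberField K] (c : NumberField.RingOfIntegers K)
    (hgen : Algebra.adjoin ℚ {(c : K)} = ⊤)
    (htype : HasExactType d (c : K) m n) (hm : m ≠ 0)
    (i : ℕ) (hi1 : 1 ≤ i) (hi2 : i ≤ m + n - 1) (hni : n ∣ i) :
    Ideal.span {(fun x => x ^ d + c)^[i] 0} ^
        (if n ∣ m - 1 then (d ^ (m - 1) - 1) * (d - 1) else d ^ (m - 1) * (d - 1)) =
      Ideal.span {(d : NumberField.RingOfIntegers K)} := by
  obtain ⟨hn, hper, hminn, hmin⟩ := htype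
  obtain ⟨a, haeq⟩ : ∃ a : ℕ → NumberField.RingOfIntegers K,
    a = fun k => (fun x => x ^ d + c)^[k] 0 := ⟨_, rfl⟩
  have h0 : a 0 = 0 := by simp [haeq]
  have ha : ∀ k, a (k + 1) = a k ^ d + c := by
    intro k; simp only [haeq, Function.iterate_succ_apply']
  have hcoe : ∀ k, (fun x => x ^ d + (c : K))^[k] 0 = (a k : K) := by
    intro k
    induction k with
    | zero => simp [h0]
    | succ k ih => rw [Function.iterate_succ_apply', ih, ha]; simp
  have hinj : ∀ x y : NumberField.RingOfIntegers K, (x : K) = (y : K) ↔ x = y :=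
    fun x y => NumberField.RingOfIntegers.ext_iff.symm
  simp only [hcoe, ne_eq, hinj] at hper hminn hmin
  change Ideal.span {(fun k => (fun x => x ^ d + c)^[k] 0) i} ^ _ = _
  rw [← haeq]
  clear haeq hcoe hgen
  have hm2 : 2 ≤ m := by
    by_contra hlt
    have hm1 : m = 1 := by omega
    subst hm1
    apply hmin 0 (by omega)
    rw [add_comm, ha n, ha 0, h0, zero_pow hd.ne_zero, zero_add, add_eq_right] at hper
    rw [zero_add, h0]
    exact eq_zero_of_pow_eq_zero hper
  have hne := a_ne_zero h0 ha (by omega) hper hmin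
  have hpow : a (m - 1 + n) ^ d = a (m - 1) ^ d := by
    have h1 := ha (m - 1 + n)
    have h2 := ha (m - 1)
    rw [show m - 1 + n + 1 = m + n by omega] at h1
    rw [show m - 1 + 1 = m by omega] at h2
    rw [h1, h2] at hper
    exact add_right_cancel hper
  obtain ⟨ζ, hζ⟩ := (IsIntegrallyClosed.pow_dvd_pow_iff hd.ne_zero).1 (dvd_of_eq hpow.symm)
  have hζ1 : ζ ^ d = 1 := by
    rw [hζ, mul_pow] at hpow
    exact (mul_eq_left₀ (pow_ne_zero _ (hne _ (by omega)))).1 hpow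
  have hζ2 : ζ ≠ 1 := by
    rintro rfl
    exact hmin (m - 1) (by omega) (by rw [hζ, mul_one])
  have : Fact d.Prime := ⟨hd⟩
  have hprim : IsPrimitiveRoot ζ d := IsPrimitiveRoot.iff_orderOf.2 (orderOf_eq_prime hζ1 hζ2)
  apply Ideal.eq_of_localization_maximal
  intro P hP
  have hPne : P ≠ ⊥ := Ring.ne_bot_of_isMaximal_of_not_isField hP
    (NumberField.RingOfIntegers.not_isField K)
  let g := algebraMap (NumberField.RingOfIntegers K) (Localization.AtPrime P)
  have : IsDiscreteValuationRing (Localization.AtPrime P) :=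
    IsLocalization.AtPrime.isDiscreteValuationRing_of_dedekind_domain _ hPne _
  have hg : Function.Injective g :=
    IsLocalization.injective _ P.primeCompl_le_nonZeroDivisors
  have hmain := local_main (IsDiscreteValuationRing.addVal (Localization.AtPrime P))
    (a := fun k => g (a k)) (c := g c) (d := d) (m := m) (n := n) (ζ := g ζ)
    (fun x hx => IsDiscreteValuationRing.addVal_eq_top_iff.1 hx) hd (by simp [h0])
    (fun k => by simp [ha]) hm2 hn (by simp [hper])
    (fun j hj1 hj2 h => hminn j hj1 hj2 (hg h)) (fun k hk h => hmin k hk (hg h))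
    (hprim.map_of_injective hg) (by rw [hζ, map_mul, mul_comm]) i hi1 hni
  rw [Ideal.span_singleton_pow, Ideal.map_span, Ideal.map_span, Set.image_singleton,
    Set.image_singleton, map_pow, map_natCast, Ideal.span_singleton_eq_span_singleton]
  exact associated_of_dvd_dvd (IsDiscreteValuationRing.addVal_le_iff_dvd.1 hmain.le)
    (IsDiscreteValuationRing.addVal_le_iff_dvd.1 hmain.ge)
end
end
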